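/- arXiv:1609.02867 — 5 statements merged into one kernel-verified Lean document; each statement's English description precedes it below -/
import Mathlib

section
/- Let μ ≤_cd ν be probability measures on ℝ with finite first moments. Let Γ ⊆ ℝ² and M ⊆ ℝ be Borel sets such that the pair (Γ,M) is nondegenerate, first-order left-monotone, and second-order right-monotone. If P ∈ S(μ,ν) is concentrated on Γ and P|_{M×ℝ} is a martingale, then P equals the Decreasing Supermartingale Transport; that is, for every x ∈ ℝ the second marginal of the restriction P|_{[x,∞)×ℝ} equals the shadow S^ν(μ|_{[x,∞)}). -/
/-!
Fix `x` and let `θ` be the second marginal of `P` restricted to `[x, ∞) × ℝ`. That `θ` dominates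
`μ|_{[x,∞)}` in convex-decreasing order is conditional Jensen (`supermartingale_jensen`). Minimality
of `θ` is obtained by linear-programming duality. Given a convex nonincreasing `φ`, suppose `ψ` is
convex nonincreasing with `φ ≤ ψ` everywhere, `ψ = φ` on the set `B` of targets in `Γ` of starting
points below `x`, and `∫ ψ dθ = ∫ ψ dμ|_{[x,∞)}`. Then for every competitor `θ' ≤ ν`
`∫ φ dθ' = ∫ ψ dθ' - ∫ (ψ - φ) dθ' ≥ ∫ ψ dμ|_{[x,∞)} - ∫ (ψ - φ) dν = ∫ ψ dθ - ∫ (ψ - φ) dθ = ∫ φ dθ`,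
because `ψ - φ` vanishes on `B`, which carries `ν - θ`.

The function `ψ` is the largest convex nonincreasing function below `φ` on `K`, where `K` is `B`
together with its lower bounds (`envelope`, `contactSet`). By maximality it is affine on every gap
of `K` (`envelope_affine`) and constant to the right of `K` (`envelope_const`). Second-order
monotonicity and nondegeneracy place each fibre of `Γ` over `s ∈ M`, `s ≥ x`, in the closure of a
gap with `s` inside, unless the fibre is `{s}`; first-order monotonicity places each fibre over
`s ∉ M`, together with `s`, to the right of `K`. As `P` is a martingale over `M`, the equality of the
integrals of `ψ` follows (`envelope_integral_eq`). If `B` is empty, `θ` and all competitors equal `ν`.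
-/

open MeasureTheory Set
open scoped ENNReal

noncomputable section

/-- A finite Borel measure on ℝ with finite first moment. -/
def FiniteFirstMoment (μ : Measure ℝ) : Prop :=
  IsFiniteMeasure μ ∧ Integrable (fun x : ℝ => x) μ

/-- Linear growth of a real function. -/
def LinearGrowth (φ : ℝ → ℝ) : Prop :=
  ∃ C : ℝ, ∀ x : ℝ, |φ x| ≤ C * (1 + |x|)

/-- Convex-decreasing (second stochastic) order `μ ≤_cd ν`. -/
def CDOrder (μ ν : Measure ℝ) : Prop :=
  ∀ φ : ℝ → ℝ, ConvexOn ℝ Set.univ φ → Antitone φ → LinearGrowth φ →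
    ∫ x, φ x ∂μ ≤ ∫ x, φ x ∂ν

/-- Positive-convex-decreasing order `μ ≤_pcd ν`. -/
def PCDOrder (μ ν : Measure ℝ) : Prop :=
  ∀ φ : ℝ → ℝ, ConvexOn ℝ Set.univ φ → Antitone φ → (∀ x : ℝ, 0 ≤ φ x) →
    LinearGrowth φ → ∫ x, φ x ∂μ ≤ ∫ x, φ x ∂ν

/-- Convex order `μ ≤_c ν`. -/
def COrder (μ ν : Measure ℝ) : Prop :=
  ∀ φ : ℝ → ℝ, ConvexOn ℝ Set.univ φ → LinearGrowth φ →
    ∫ x, φ x ∂μ ≤ ∫ x, φ x ∂ν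

/-- `P` is a coupling of `μ` and `ν`. -/
def IsCoupling (P : Measure (ℝ × ℝ)) (μ ν : Measure ℝ) : Prop :=
  P.map Prod.fst = μ ∧ P.map Prod.snd = ν

/-- The supermartingale property of a measure on `ℝ × ℝ`. -/
def SupermartingaleProperty (P : Measure (ℝ × ℝ)) : Prop :=
  ∀ A : Set ℝ, MeasurableSet A →
    ∫ p in A ×ˢ (Set.univ : Set ℝ), p.2 ∂P ≤ ∫ p in A ×ˢ (Set.univ : Set ℝ), p.1 ∂P

/-- `P ∈ S(μ,ν)`: supermartingale coupling. -/
def IsSupermartingaleCoupling (P : Measure (ℝ × ℝ)) (μ ν : Measure ℝ) : Prop :=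
  IsCoupling P μ ν ∧ SupermartingaleProperty P

/-- `P|_{M×ℝ}` is a martingale. -/
def MartingaleOn (P : Measure (ℝ × ℝ)) (M : Set ℝ) : Prop :=
  ∀ A : Set ℝ, MeasurableSet A → A ⊆ M →
    ∫ p in A ×ˢ (Set.univ : Set ℝ), p.2 ∂P = ∫ p in A ×ˢ (Set.univ : Set ℝ), p.1 ∂P

/-- `P ∈ M(μ,ν)`: martingale coupling. -/
def IsMartingaleCoupling (P : Measure (ℝ × ℝ)) (μ ν : Measure ℝ) : Prop :=
  IsCoupling P μ ν ∧ MartingaleOn P Set.univ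

/-- `θ` is the shadow `S^ν(μ)` of `μ` in `ν`. -/
def IsShadow (μ ν θ : Measure ℝ) : Prop :=
  FiniteFirstMoment θ ∧ CDOrder μ θ ∧ θ ≤ ν ∧
  ∀ θ' : Measure ℝ, FiniteFirstMoment θ' → CDOrder μ θ' → θ' ≤ ν → CDOrder θ θ'

/-- `P` is the Increasing Supermartingale Transport from `μ` to `ν`. -/
def IsIncreasingSMT (μ ν : Measure ℝ) (P : Measure (ℝ × ℝ)) : Prop :=
  IsSupermartingaleCoupling P μ ν ∧
  ∀ x : ℝ, ∃ θ : Measure ℝ, IsShadow (μ.restrict (Set.Iic x)) ν θ ∧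
    ∀ A : Set ℝ, MeasurableSet A → P (Set.Iic x ×ˢ A) = θ A

/-- `P` is the Decreasing Supermartingale Transport from `μ` to `ν`. -/
def IsDecreasingSMT (μ ν : Measure ℝ) (P : Measure (ℝ × ℝ)) : Prop :=
  IsSupermartingaleCoupling P μ ν ∧
  ∀ x : ℝ, ∃ θ : Measure ℝ, IsShadow (μ.restrict (Set.Ici x)) ν θ ∧
    ∀ A : Set ℝ, MeasurableSet A → P (Set.Ici x ×ˢ A) = θ A

/-- Relaxed supermartingale Spence–Mirrlees property. -/
def RelaxedSupermartingaleSM (f : ℝ × ℝ → ℝ) : Prop :=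
  ∀ x₁ x₂ : ℝ, x₁ < x₂ →
    Antitone (fun y : ℝ => f (x₂, y) - f (x₁, y)) ∧
    ConvexOn ℝ Set.univ (fun y : ℝ => f (x₂, y) - f (x₁, y))

/-- (Strict) supermartingale Spence–Mirrlees property. -/
def SupermartingaleSM (f : ℝ × ℝ → ℝ) : Prop :=
  ∀ x₁ x₂ : ℝ, x₁ < x₂ →
    StrictAnti (fun y : ℝ => f (x₂, y) - f (x₁, y)) ∧
    StrictConvexOn ℝ Set.univ (fun y : ℝ => f (x₂, y) - f (x₁, y))

/-- `f⁺` is `S(μ,ν)`-uniformly integrable. -/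
def PosPartUnifInt (μ ν : Measure ℝ) (f : ℝ × ℝ → ℝ) : Prop :=
  ∀ ε : ℝ, 0 < ε → ∃ N : ℝ, ∀ P : Measure (ℝ × ℝ),
    IsSupermartingaleCoupling P μ ν →
      ∫ p in {p : ℝ × ℝ | N < max (f p) 0}, max (f p) 0 ∂P ≤ ε

/-- First-order left monotonicity of `(Γ, M)`. -/
def FirstOrderLeftMonotone (Γ : Set (ℝ × ℝ)) (M : Set ℝ) : Prop :=
  ∀ x₁ y₁ x₂ y₂ : ℝ, (x₁, y₁) ∈ Γ → (x₂, y₂) ∈ Γ → x₁ < x₂ → x₂ ∉ M → y₁ ≤ y₂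

/-- First-order right monotonicity of `(Γ, M)`. -/
def FirstOrderRightMonotone (Γ : Set (ℝ × ℝ)) (M : Set ℝ) : Prop :=
  ∀ x₁ y₁ x₂ y₂ : ℝ, (x₁, y₁) ∈ Γ → (x₂, y₂) ∈ Γ → x₁ < x₂ → x₁ ∉ M → y₂ ≤ y₁

/-- Second-order left monotonicity of `Γ`. -/
def SecondOrderLeftMonotone (Γ : Set (ℝ × ℝ)) : Prop :=
  ∀ x y₁ y₂ x' y' : ℝ, (x, y₁) ∈ Γ → (x, y₂) ∈ Γ → (x', y') ∈ Γ →
    y₁ < y₂ → x < x' → y' ∉ Set.Ioo y₁ y₂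

/-- Second-order right monotonicity of `Γ`. -/
def SecondOrderRightMonotone (Γ : Set (ℝ × ℝ)) : Prop :=
  ∀ x y₁ y₂ x' y' : ℝ, (x, y₁) ∈ Γ → (x, y₂) ∈ Γ → (x', y') ∈ Γ →
    y₁ < y₂ → x' < x → y' ∉ Set.Ioo y₁ y₂

/-- Nondegeneracy of `(Γ, M)`. -/
def Nondegenerate (Γ : Set (ℝ × ℝ)) (M : Set ℝ) : Prop :=
  (∀ x y : ℝ, (x, y) ∈ Γ → x < y → ∃ y' : ℝ, y' < x ∧ (x, y') ∈ Γ) ∧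
  (∀ x y : ℝ, x ∈ M → (x, y) ∈ Γ → y < x → ∃ y' : ℝ, x < y' ∧ (x, y') ∈ Γ)

/-- The put function `p_μ`. -/
def put (μ : Measure ℝ) (t : ℝ) : ℝ := ∫ s, max (t - s) 0 ∂μ

/-- `x` is a barrier for the supermartingale transports from `μ` to `ν`. -/
def IsBarrier (μ ν : Measure ℝ) (x : ℝ) : Prop :=
  ∀ P : Measure (ℝ × ℝ), IsSupermartingaleCoupling P μ ν →
    P {p : ℝ × ℝ | p.1 ≤ x ∧ x < p.2} = 0 ∧ P {p : ℝ × ℝ | x ≤ p.1 ∧ p.2 < x} = 0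

/-- Barycenter of a finite measure (with `bary 0 = 0`). -/
def bary (θ : Measure ℝ) : ℝ := (∫ t, t ∂θ) / (θ Set.univ).toReal

/-! ### The decreasing convex envelope -/

/-- The convex nonincreasing functions lying below `φ` on `K`. -/
def Minorants (K : Set ℝ) (φ : ℝ → ℝ) : Set (ℝ → ℝ) :=
  {g | ConvexOn ℝ Set.univ g ∧ Antitone g ∧ ∀ k ∈ K, g k ≤ φ k}

/-- The largest convex nonincreasing function lying below `φ` on `K`, as a pointwise supremum.
It is a genuine supremum when `K` is unbounded below, since `g y ≤ g k ≤ φ k` for `k ≤ y` in `K`. -/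
def envelope (K : Set ℝ) (φ : ℝ → ℝ) (y : ℝ) : ℝ := ⨆ g : Minorants K φ, g.1 y

section Envelope

variable {K : Set ℝ} {φ : ℝ → ℝ}

lemma envelope_bdd (hK : ∀ z, ∃ k ∈ K, k ≤ z) (y : ℝ) :
    BddAbove (Set.range fun g : Minorants K φ => g.1 y) := by
  obtain ⟨k, hk, hky⟩ := hK y
  refine ⟨φ k, ?_⟩
  rintro _ ⟨g, rfl⟩
  exact (g.2.2.1 hky).trans (g.2.2.2 k hk)

lemma le_envelope (hK : ∀ z, ∃ k ∈ K, k ≤ z) {g : ℝ → ℝ} (hg : g ∈ Minorants K φ) (y : ℝ) :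
    g y ≤ envelope K φ y :=
  le_ciSup (envelope_bdd hK y) (⟨g, hg⟩ : Minorants K φ)

lemma self_mem_minorants (hc : ConvexOn ℝ Set.univ φ) (ha : Antitone φ) : φ ∈ Minorants K φ :=
  ⟨hc, ha, fun _ _ => le_rfl⟩

lemma envelope_le (hc : ConvexOn ℝ Set.univ φ) (ha : Antitone φ) {y c : ℝ}
    (h : ∀ g ∈ Minorants K φ, g y ≤ c) : envelope K φ y ≤ c := by
  have : Nonempty (Minorants K φ) := ⟨⟨φ, self_mem_minorants hc ha⟩⟩
  exact ciSup_le fun g => h g.1 g.2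

lemma envelope_mem (hK : ∀ z, ∃ k ∈ K, k ≤ z) (hc : ConvexOn ℝ Set.univ φ) (ha : Antitone φ) :
    envelope K φ ∈ Minorants K φ := by
  refine ⟨⟨convex_univ, ?_⟩, ?_, ?_⟩
  · intro x _ y _ a b h0 h1 hab
    refine envelope_le hc ha fun g hg => (hg.1.2 (mem_univ x) (mem_univ y) h0 h1 hab).trans ?_
    have e1 := le_envelope hK hg x
    have e2 := le_envelope hK hg y
    simp only [smul_eq_mul]
    gcongr
  · intro x y hxy
    exact envelope_le hc ha fun g hg => (hg.2.1 hxy).trans (le_envelope hK hg x)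
  · intro k hk
    exact envelope_le hc ha fun g hg => hg.2.2 k hk

lemma envelope_linearGrowth (hK : ∀ z, ∃ k ∈ K, k ≤ z) (hc : ConvexOn ℝ Set.univ φ)
    (ha : Antitone φ) (hl : LinearGrowth φ) : LinearGrowth (envelope K φ) := by
  obtain ⟨C, hC⟩ := hl
  obtain ⟨k, hk, hk0⟩ := hK 0
  have hmem := envelope_mem hK hc ha
  have hC0 : 0 ≤ C := by simpa using (abs_nonneg _).trans (hC 0)
  refine ⟨C + |φ k|, fun y => ?_⟩
  have h1 := le_envelope hK (self_mem_minorants (K := K) hc ha) y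
  have h2 := abs_le.1 (hC y)
  have hp : 0 ≤ |φ k| * |y| := by positivity
  have hup : envelope K φ y ≤ (C + |φ k|) * (1 + |y|) := by
    rcases le_total k y with hky | hky
    · have := hmem.2.1 hky
      have := hmem.2.2 k hk
      have := le_abs_self (φ k)
      have : 0 ≤ C * (1 + |y|) := by positivity
      nlinarith
    · -- between two points of `K ∩ (-∞, 0]` the affine function `C * (1 - y)` dominates
      obtain ⟨j, hj, hjy⟩ := hK y
      have hCk := (le_abs_self _).trans (hC k)
      have hCj := (le_abs_self _).trans (hC j)
      rw [abs_of_nonpos hk0] at hCk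
      rw [abs_of_nonpos (by linarith : j ≤ 0)] at hCj
      have hek := (hmem.2.2 k hk).trans hCk
      have hej := (hmem.2.2 j hj).trans hCj
      have hconv : ConvexOn ℝ Set.univ (fun z => envelope K φ z + C * z) :=
        hmem.1.add ((convexOn_id convex_univ).smul hC0)
      have := hconv.le_max_of_mem_Icc (mem_univ j) (mem_univ k) ⟨hjy, hky⟩
      have h3 : envelope K φ y + C * y ≤ C := this.trans (max_le (by linarith) (by linarith))
      rw [abs_of_nonpos (by linarith : y ≤ 0)] at hp ⊢
      nlinarith [abs_nonneg (φ k)]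
  rw [abs_le]
  refine ⟨?_, hup⟩
  nlinarith [abs_nonneg (φ k)]

/-- On a gap `(p, q)` of `K` the envelope is affine: its maximum with the chord over `[p, q]` is
again a minorant. -/
lemma envelope_affine (hK : ∀ z, ∃ k ∈ K, k ≤ z) (hc : ConvexOn ℝ Set.univ φ) (ha : Antitone φ)
    {p q : ℝ} (hpq : p < q) (hgap : ∀ k ∈ K, k ∉ Set.Ioo p q) {y : ℝ} (hy : y ∈ Set.Icc p q) :
    envelope K φ y =
      envelope K φ p + (envelope K φ q - envelope K φ p) / (q - p) * (y - p) := by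
  have hmem := envelope_mem hK hc ha
  set ψ := envelope K φ with hψ
  set d := (ψ q - ψ p) / (q - p) with hd
  have hqp : 0 < q - p := by linarith
  have hdq : d * (q - p) = ψ q - ψ p := by rw [hd]; field_simp
  have hd0 : d ≤ 0 := div_nonpos_of_nonpos_of_nonneg (by linarith [hmem.2.1 hpq.le]) hqp.le
  have hdc : ConvexOn ℝ Set.univ (fun z => ψ z + (-d) * z) :=
    hmem.1.add ((convexOn_id convex_univ).smul (by linarith))
  -- outside the gap the chord lies below `ψ`
  have hout : ∀ z, z ∉ Set.Ioo p q → ψ p + d * (z - p) ≤ ψ z := by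
    intro z hz
    rcases le_or_gt z p with hzp | hzp
    · rcases hzp.eq_or_lt with rfl | hzp
      · simp
      · have := hmem.1.slope_mono_adjacent (mem_univ z) (mem_univ q) hzp hpq
        rw [← hd, div_le_iff₀ (by linarith)] at this
        linarith
    · have hqz : q ≤ z := by
        by_contra hlt
        exact hz ⟨hzp, not_le.1 hlt⟩
      rcases hqz.eq_or_lt with rfl | hqz
      · linarith
      · have := hmem.1.slope_mono_adjacent (mem_univ p) (mem_univ z) hpq hqz
        rw [← hd, le_div_iff₀ (by linarith)] at this
        linarith
  have hmax : (fun z => max (ψ z) (ψ p + d * (z - p))) ∈ Minorants K φ := by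
    refine ⟨?_, ?_, ?_⟩
    · refine hmem.1.sup ⟨convex_univ, ?_⟩
      intro u _ v _ a b _ _ hab
      simp only [smul_eq_mul]
      apply le_of_eq
      linear_combination (-ψ p + d * p) * hab
    · intro u v huv
      exact max_le_max (hmem.2.1 huv) (by nlinarith)
    · intro k hk
      exact max_le (hmem.2.2 k hk) ((hout k (hgap k hk)).trans (hmem.2.2 k hk))
  refine le_antisymm ?_ ((le_max_right _ _).trans (le_envelope hK hmax y))
  have := hdc.le_max_of_mem_Icc (mem_univ p) (mem_univ q) hy
  have e : ψ q + -d * q = ψ p + -d * p := by linarith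
  simp only [e, max_self] at this
  linarith

/-- To the right of `K` the envelope is constant. -/
lemma envelope_const (hK : ∀ z, ∃ k ∈ K, k ≤ z) (hc : ConvexOn ℝ Set.univ φ) (ha : Antitone φ)
    {p : ℝ} (hgap : ∀ k ∈ K, k ≤ p) {y : ℝ} (hy : p ≤ y) :
    envelope K φ y = envelope K φ p := by
  have hmem := envelope_mem hK hc ha
  have hmax : (fun z => max (envelope K φ z) (envelope K φ p)) ∈ Minorants K φ := by
    refine ⟨hmem.1.sup (convexOn_const _ convex_univ), fun u v huv => ?_, fun k hk => ?_⟩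
    · exact max_le_max (hmem.2.1 huv) le_rfl
    · exact max_le (hmem.2.2 k hk) ((hmem.2.1 (hgap k hk)).trans (hmem.2.2 k hk))
  exact le_antisymm (hmem.2.1 hy) ((le_max_right _ _).trans (le_envelope hK hmax y))

end Envelope

/-! ### Integrals against a supermartingale coupling -/

lemma ConvexOn.continuous_of_univ {φ : ℝ → ℝ} (hc : ConvexOn ℝ Set.univ φ) : Continuous φ :=
  continuousOn_univ.1 (hc.continuousOn isOpen_univ)

lemma LinearGrowth.integrable {φ : ℝ → ℝ} (hl : LinearGrowth φ) (hφ : Continuous φ)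
    {α : Type*} [MeasurableSpace α] {m : Measure α} [IsFiniteMeasure m] {X : α → ℝ}
    (hX : Integrable X m) : Integrable (fun a => φ (X a)) m := by
  obtain ⟨C, hC⟩ := hl
  refine Integrable.mono' (((integrable_const 1).add hX.abs).const_mul C)
    (hφ.comp_aestronglyMeasurable hX.aestronglyMeasurable) (ae_of_all _ fun a => ?_)
  simpa using hC (X a)

/-- The σ-algebra on `ℝ × ℝ` generated by the first coordinate. -/
abbrev startAlgebra : MeasurableSpace (ℝ × ℝ) := MeasurableSpace.comap Prod.fst inferInstance

/-- Conditional Jensen for a supermartingale coupling: a convex nonincreasing function has a larger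
integral at the endpoint than at the starting point, over any set of starting points. -/
lemma supermartingale_jensen {P : Measure (ℝ × ℝ)} [IsFiniteMeasure P]
    (hX : Integrable (fun p : ℝ × ℝ => p.1) P) (hY : Integrable (fun p : ℝ × ℝ => p.2) P)
    (hS : SupermartingaleProperty P) {φ : ℝ → ℝ} (hc : ConvexOn ℝ Set.univ φ) (ha : Antitone φ)
    (hl : LinearGrowth φ) {A : Set ℝ} (hA : MeasurableSet A) :
    ∫ p in A ×ˢ (Set.univ : Set ℝ), φ p.1 ∂P ≤ ∫ p in A ×ˢ (Set.univ : Set ℝ), φ p.2 ∂P := by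
  have hφ := hc.continuous_of_univ
  have hm : startAlgebra ≤ Prod.instMeasurableSpace := measurable_fst.comap_le
  have hfst : StronglyMeasurable[startAlgebra] (fun p : ℝ × ℝ => p.1) :=
    (comap_measurable Prod.fst).stronglyMeasurable
  have hset : ∀ B : Set ℝ, MeasurableSet B → MeasurableSet[startAlgebra] (B ×ˢ (Set.univ : Set ℝ)) :=
    fun B hB => ⟨B, hB, by ext p; simp⟩
  have hle : P[fun p => p.2 | startAlgebra] ≤ᵐ[P] fun p => p.1 := by
    refine ae_le_of_ae_le_trim (hm := hm) ?_
    refine ae_le_of_forall_setIntegral_le (integrable_condExp.trim hm stronglyMeasurable_condExp)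
      (hX.trim hm hfst) ?_
    rintro s hs -
    rw [← setIntegral_trim hm stronglyMeasurable_condExp hs, ← setIntegral_trim hm hfst hs,
      setIntegral_condExp hm hY hs]
    obtain ⟨B, hB, rfl⟩ := hs
    have e : Prod.fst ⁻¹' B = B ×ˢ (Set.univ : Set ℝ) := by ext p; simp
    rw [e]
    exact hS B hB
  have hφY : Integrable (φ ∘ fun p : ℝ × ℝ => p.2) P := hl.integrable hφ hY
  have hJ := hc.map_condExp_le_univ hm hφ.lowerSemicontinuous hY hφY
  have key : ∫ p in A ×ˢ (Set.univ : Set ℝ), (P[φ ∘ fun p : ℝ × ℝ => p.2 | startAlgebra]) p ∂P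
      = ∫ p in A ×ˢ (Set.univ : Set ℝ), φ p.2 ∂P := setIntegral_condExp hm hφY (hset A hA)
  rw [← key]
  refine integral_mono_ae (hl.integrable hφ hX).integrableOn integrable_condExp.integrableOn ?_
  refine ae_restrict_of_ae ?_
  filter_upwards [hle, hJ] with p h1 h2
  exact (ha h1).trans h2

/-- Martingale increments over `M` are orthogonal to functions of the starting point. -/
lemma martingale_orthogonal {P : Measure (ℝ × ℝ)} [IsFiniteMeasure P]
    (hX : Integrable (fun p : ℝ × ℝ => p.1) P) (hY : Integrable (fun p : ℝ × ℝ => p.2) P)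
    {M : Set ℝ} (hPM : MartingaleOn P M) {A : Set ℝ} (hA : MeasurableSet A) (hAM : A ⊆ M)
    {d : ℝ → ℝ} (hd : Measurable d)
    (hint : IntegrableOn (fun p : ℝ × ℝ => d p.1 * (p.2 - p.1)) (A ×ˢ (Set.univ : Set ℝ)) P) :
    ∫ p in A ×ˢ (Set.univ : Set ℝ), d p.1 * (p.2 - p.1) ∂P = 0 := by
  have hm : startAlgebra ≤ Prod.instMeasurableSpace := measurable_fst.comap_le
  have hdm : StronglyMeasurable[startAlgebra] (fun p : ℝ × ℝ => d p.1) :=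
    (hd.comp (comap_measurable Prod.fst)).stronglyMeasurable
  set Q := P.restrict (A ×ˢ (Set.univ : Set ℝ)) with hQ
  have hYX : Integrable (fun p : ℝ × ℝ => p.2 - p.1) Q := hY.integrableOn.sub hX.integrableOn
  have h0 : (fun _ => (0 : ℝ)) =ᵐ[Q] Q[fun p : ℝ × ℝ => p.2 - p.1 | startAlgebra] := by
    refine ae_eq_condExp_of_forall_setIntegral_eq hm hYX (fun s _ _ => integrableOn_zero) ?_
      aestronglyMeasurable_const
    rintro s hs -
    obtain ⟨B, hB, rfl⟩ := hs
    have e : Prod.fst ⁻¹' B ∩ A ×ˢ (Set.univ : Set ℝ) = (B ∩ A) ×ˢ (Set.univ : Set ℝ) := by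
      ext p; simp
    rw [hQ, Measure.restrict_restrict (measurable_fst hB), e,
      integral_sub hY.integrableOn hX.integrableOn,
      hPM _ (hB.inter hA) (inter_subset_right.trans hAM)]
    simp
  have hpull := condExp_mul_of_stronglyMeasurable_left (μ := Q) hdm
    (g := fun p : ℝ × ℝ => p.2 - p.1) hint hYX
  calc ∫ p, d p.1 * (p.2 - p.1) ∂Q
      = ∫ p, (Q[(fun p : ℝ × ℝ => d p.1) * fun p : ℝ × ℝ => p.2 - p.1 | startAlgebra]) p ∂Q :=
        (integral_condExp hm).symm
    _ = ∫ _, (0 : ℝ) ∂Q := by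
        refine integral_congr_ae ?_
        filter_upwards [hpull, h0] with p h1 h2
        rw [h1, Pi.mul_apply, ← h2, mul_zero]
    _ = 0 := by simp

/-! ### Geometry of the support and optimality -/

/-- The second coordinates of the points of `Γ` over starting points in `(-∞, x)`. -/
def lowerTargets (Γ : Set (ℝ × ℝ)) (x : ℝ) : Set ℝ := {y | ∃ x' < x, (x', y) ∈ Γ}

/-- The contact set: the targets of `(-∞, x)` together with their lower bounds. Adding the
latter makes the set unbounded below. -/
def contactSet (Γ : Set (ℝ × ℝ)) (x : ℝ) : Set ℝ := lowerTargets Γ x ∪ lowerBounds (lowerTargets Γ x)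

lemma contactSet_unbounded (Γ : Set (ℝ × ℝ)) (x : ℝ) (z : ℝ) :
    ∃ k ∈ contactSet Γ x, k ≤ z := by
  by_cases hz : z ∈ lowerBounds (lowerTargets Γ x)
  · exact ⟨z, Or.inr hz, le_rfl⟩
  · simp only [lowerBounds, mem_ofPred_eq, not_forall, not_le] at hz
    obtain ⟨b, hb, hbz⟩ := hz
    exact ⟨b, Or.inl hb, hbz.le⟩

lemma exists_le_fiber {Γ : Set (ℝ × ℝ)} {M : Set ℝ} (hnd : Nondegenerate Γ M) {s y : ℝ}
    (h : (s, y) ∈ Γ) : ∃ y' ≤ s, (s, y') ∈ Γ := by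
  rcases le_or_gt y s with hy | hy
  · exact ⟨y, hy, h⟩
  · obtain ⟨y', hy', h'⟩ := hnd.1 s y h hy
    exact ⟨y', hy'.le, h'⟩

/-- Over `s ≥ x` outside `M`, the envelope takes the same value at the target as at `s`. -/
lemma envelope_fiber_compl {Γ : Set (ℝ × ℝ)} {M : Set ℝ} (hnd : Nondegenerate Γ M)
    (h1 : FirstOrderLeftMonotone Γ M) {x : ℝ} (hB : (lowerTargets Γ x).Nonempty) {φ : ℝ → ℝ}
    (hc : ConvexOn ℝ Set.univ φ) (ha : Antitone φ) {s y : ℝ} (hs : x ≤ s) (hsM : s ∉ M)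
    (h : (s, y) ∈ Γ) :
    envelope (contactSet Γ x) φ y = envelope (contactSet Γ x) φ s := by
  have hK := contactSet_unbounded Γ x
  have hright : ∀ p, (s, p) ∈ Γ → ∀ k ∈ contactSet Γ x, k ≤ p := by
    intro p hp k hk
    have hBp : ∀ b ∈ lowerTargets Γ x, b ≤ p := fun b ⟨x', hx', hb⟩ =>
      h1 x' b s p hb hp (hx'.trans_le hs) hsM
    rcases hk with hk | hk
    · exact hBp k hk
    · obtain ⟨b, hb⟩ := hB
      exact (hk hb).trans (hBp b hb)
  obtain ⟨p, hps, hp⟩ := exists_le_fiber hnd h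
  rw [envelope_const hK hc ha (hright p hp) hps]
  rcases le_total p y with hpy | hpy
  · exact envelope_const hK hc ha (hright p hp) hpy
  · exact (envelope_const hK hc ha (hright y h) hpy).symm

/-- Over `s ≥ x` in `M`, the envelope equals its tangent at `s` at the target: unless the target is
`s` itself, both lie in an interval, with `s` in the interior, on which the envelope is affine. -/
lemma envelope_fiber_mem {Γ : Set (ℝ × ℝ)} {M : Set ℝ} (hnd : Nondegenerate Γ M)
    (h2 : SecondOrderRightMonotone Γ) {x : ℝ} (hB : (lowerTargets Γ x).Nonempty) {φ : ℝ → ℝ}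
    (hc : ConvexOn ℝ Set.univ φ) (ha : Antitone φ) {s y : ℝ} (hs : x ≤ s) (hsM : s ∈ M)
    (h : (s, y) ∈ Γ) :
    envelope (contactSet Γ x) φ y - envelope (contactSet Γ x) φ s =
      deriv (envelope (contactSet Γ x) φ) s * (y - s) := by
  have hK := contactSet_unbounded Γ x
  have hgap : ∀ p q, (s, p) ∈ Γ → (s, q) ∈ Γ → p < s → s < q →
      ∀ k ∈ contactSet Γ x, k ∉ Set.Ioo p q := by
    intro p q hp hq hps hsq k hk hkpq
    have hBn : ∀ b ∈ lowerTargets Γ x, b ∉ Set.Ioo p q := fun b ⟨x', hx', hb⟩ =>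
      h2 s p q x' b hp hq hb (hps.trans hsq) (hx'.trans_le hs)
    rcases hk with hk | hk
    · exact hBn k hk hkpq
    · -- some target of `(-∞, x)` lies below `x ≤ s < q`, hence below `p`
      obtain ⟨b, x', hx', hb⟩ := hB
      obtain ⟨b', hb'x, hb'⟩ := exists_le_fiber hnd hb
      have hkb : k ≤ b' := hk ⟨x', hx', hb'⟩
      exact hBn b' ⟨x', hx', hb'⟩ ⟨hkpq.1.trans_le hkb, by linarith⟩
  have main : ∀ p q, (s, p) ∈ Γ → (s, q) ∈ Γ → p < s → s < q → y ∈ Set.Icc p q →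
      envelope (contactSet Γ x) φ y - envelope (contactSet Γ x) φ s =
      deriv (envelope (contactSet Γ x) φ) s * (y - s) := by
    intro p q hp hq hps hsq hy
    set ψ := envelope (contactSet Γ x) φ
    have haff : ∀ z ∈ Set.Icc p q, ψ z = ψ p + (ψ q - ψ p) / (q - p) * (z - p) := fun z hz =>
      envelope_affine hK hc ha (hps.trans hsq) (hgap p q hp hq hps hsq) hz
    have hev : ψ =ᶠ[nhds s] fun z => ψ p + (ψ q - ψ p) / (q - p) * (z - p) := by
      filter_upwards [Icc_mem_nhds hps hsq] with z hz using haff z hz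
    have hder : deriv ψ s = (ψ q - ψ p) / (q - p) := by
      rw [hev.deriv_eq]
      simp
    rw [hder, haff y hy, haff s ⟨hps.le, hsq.le⟩]
    ring
  rcases lt_trichotomy y s with hy | rfl | hy
  · obtain ⟨q, hq, hqΓ⟩ := hnd.2 s y hsM h hy
    exact main y q h hqΓ hy hq ⟨le_rfl, (hy.trans hq).le⟩
  · simp
  · obtain ⟨p, hp, hpΓ⟩ := hnd.1 s y h hy
    exact main p y hpΓ h hp hy ⟨(hp.trans hy).le, le_rfl⟩

/-- The envelope has the same integral at the starting points `s ≥ x` and at their targets. -/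
lemma envelope_integral_eq {Γ : Set (ℝ × ℝ)} {M : Set ℝ} (hM : MeasurableSet M)
    (hnd : Nondegenerate Γ M) (h1 : FirstOrderLeftMonotone Γ M) (h2 : SecondOrderRightMonotone Γ)
    {P : Measure (ℝ × ℝ)} [IsFiniteMeasure P]
    (hX : Integrable (fun p : ℝ × ℝ => p.1) P) (hY : Integrable (fun p : ℝ × ℝ => p.2) P)
    (hPΓ : P Γᶜ = 0) (hPM : MartingaleOn P M) {x : ℝ} (hB : (lowerTargets Γ x).Nonempty)
    {φ : ℝ → ℝ} (hc : ConvexOn ℝ Set.univ φ) (ha : Antitone φ) (hl : LinearGrowth φ) :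
    ∫ p in Set.Ici x ×ˢ (Set.univ : Set ℝ), envelope (contactSet Γ x) φ p.2 ∂P =
      ∫ p in Set.Ici x ×ˢ (Set.univ : Set ℝ), envelope (contactSet Γ x) φ p.1 ∂P := by
  have hK := contactSet_unbounded Γ x
  have hmem := envelope_mem hK hc ha
  have hlψ := envelope_linearGrowth hK hc ha hl
  have hψ := hmem.1.continuous_of_univ
  set ψ := envelope (contactSet Γ x) φ with hψdef
  have hiX : Integrable (fun p : ℝ × ℝ => ψ p.1) P := hlψ.integrable hψ hX
  have hiY : Integrable (fun p : ℝ × ℝ => ψ p.2) P := hlψ.integrable hψ hY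
  have hΓae : ∀ᵐ p ∂P, p ∈ Γ := hPΓ
  have hA : MeasurableSet (Set.Ici x ∩ M) := measurableSet_Ici.inter hM
  have hA' : MeasurableSet (Set.Ici x \ M) := measurableSet_Ici.diff hM
  have e : Set.Ici x ×ˢ (Set.univ : Set ℝ) =
      (Set.Ici x ∩ M) ×ˢ (Set.univ : Set ℝ) ∪ (Set.Ici x \ M) ×ˢ (Set.univ : Set ℝ) := by
    rw [← union_prod, inter_union_sdiff]
  have hdisj : Disjoint ((Set.Ici x ∩ M) ×ˢ (Set.univ : Set ℝ))
      ((Set.Ici x \ M) ×ˢ (Set.univ : Set ℝ)) :=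
    Disjoint.set_prod_left (disjoint_sdiff_inter.symm) _ _
  have haeM : ∀ᵐ p ∂P.restrict ((Set.Ici x ∩ M) ×ˢ (Set.univ : Set ℝ)),
      ψ p.2 - ψ p.1 = deriv ψ p.1 * (p.2 - p.1) := by
    filter_upwards [ae_restrict_of_ae hΓae, ae_restrict_mem (hA.prod MeasurableSet.univ)]
      with p hp hpA
    exact envelope_fiber_mem hnd h2 hB hc ha hpA.1.1 hpA.1.2 hp
  have hint := (hiY.sub hiX).integrableOn (s := (Set.Ici x ∩ M) ×ˢ (Set.univ : Set ℝ))
  have hmart := martingale_orthogonal hX hY hPM hA inter_subset_right (measurable_deriv ψ)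
    (hint.congr haeM)
  rw [← integral_congr_ae haeM] at hmart
  have hcompl : ∫ p in (Set.Ici x \ M) ×ˢ (Set.univ : Set ℝ), (ψ p.2 - ψ p.1) ∂P = 0 := by
    rw [← integral_zero (ℝ × ℝ) ℝ (μ := P.restrict ((Set.Ici x \ M) ×ˢ (Set.univ : Set ℝ)))]
    refine integral_congr_ae ?_
    filter_upwards [ae_restrict_of_ae hΓae, ae_restrict_mem (hA'.prod MeasurableSet.univ)]
      with p hp hpA
    exact sub_eq_zero.2 (envelope_fiber_compl hnd h1 hB hc ha hpA.1.1 hpA.1.2 hp)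
  have hiYX : Integrable (fun p : ℝ × ℝ => ψ p.2 - ψ p.1) P := hiY.sub hiX
  rw [← sub_eq_zero, ← integral_sub hiY.integrableOn hiX.integrableOn, e,
    setIntegral_union hdisj (hA'.prod MeasurableSet.univ) hiYX.integrableOn
      hiYX.integrableOn, hmart, hcompl, add_zero]

lemma measure_eq_of_le_of_univ {θ ν : Measure ℝ} [IsFiniteMeasure ν] (hle : θ ≤ ν)
    (hu : ν.real Set.univ ≤ θ.real Set.univ) : θ = ν := by
  have : IsFiniteMeasure θ := isFiniteMeasure_of_le ν hle
  refine le_antisymm hle (Measure.le_iff.2 fun A hA => ?_)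
  have hA' : θ.real Aᶜ ≤ ν.real Aᶜ := ENNReal.toReal_mono (measure_ne_top _ _) (hle _)
  have e1 := measureReal_add_measureReal_compl (μ := θ) hA
  have e2 := measureReal_add_measureReal_compl (μ := ν) hA
  exact (ENNReal.toReal_le_toReal (measure_ne_top _ _) (measure_ne_top _ _)).1
    (show ν.real A ≤ θ.real A by linarith)

/-- Theorem 6.1(ii). If `(Γ,M)` is nondegenerate, first-order
left-monotone and second-order right-monotone, and `P ∈ S(μ,ν)` is concentrated on `Γ`
with `P|_{M×ℝ}` a martingale, then `P` is the Decreasing Supermartingale Transport: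
for every `x`, the second marginal of `P|_{[x,∞)×ℝ}` is the shadow of `μ|_{[x,∞)}` in `ν`. -/
theorem geometric_characterization_decreasing
    (μ ν : Measure ℝ) (hμp : IsProbabilityMeasure μ) (hνp : IsProbabilityMeasure ν)
    (hμ : FiniteFirstMoment μ) (hν : FiniteFirstMoment ν) (h : CDOrder μ ν)
    (Γ : Set (ℝ × ℝ)) (M : Set ℝ) (hΓ : MeasurableSet Γ) (hM : MeasurableSet M)
    (hnd : Nondegenerate Γ M)
    (h1 : FirstOrderLeftMonotone Γ M) (h2 : SecondOrderRightMonotone Γ)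
    (P : Measure (ℝ × ℝ)) (hP : IsSupermartingaleCoupling P μ ν)
    (hPΓ : P Γᶜ = 0) (hPM : MartingaleOn P M) :
    ∀ x : ℝ, IsShadow (μ.restrict (Set.Ici x)) ν
      ((P.restrict (Set.Ici x ×ˢ (Set.univ : Set ℝ))).map Prod.snd) := by
  intro x
  obtain ⟨⟨hfst, hsnd⟩, hS⟩ := hP
  have hPfin : IsFiniteMeasure P := by
    refine ⟨?_⟩
    have : P Set.univ = μ Set.univ := by
      rw [← hfst, Measure.map_apply measurable_fst MeasurableSet.univ, preimage_univ]
    rw [this]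
    exact measure_lt_top μ _
  have hX : Integrable (fun p : ℝ × ℝ => p.1) P := by
    have := hμ.2
    rw [← hfst] at this
    exact this.comp_measurable measurable_fst
  have hY : Integrable (fun p : ℝ × ℝ => p.2) P := by
    have := hν.2
    rw [← hsnd] at this
    exact this.comp_measurable measurable_snd
  set S := Set.Ici x ×ˢ (Set.univ : Set ℝ) with hSdef
  have hSm : MeasurableSet S := measurableSet_Ici.prod MeasurableSet.univ
  set θ := (P.restrict S).map Prod.snd with hθ
  have hθν : θ ≤ ν := by
    rw [hθ, ← hsnd]
    exact Measure.map_mono Measure.restrict_le_self measurable_snd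
  have hμint : ∀ f : ℝ → ℝ, Continuous f →
      ∫ s, f s ∂(μ.restrict (Set.Ici x)) = ∫ p in S, f p.1 ∂P := by
    intro f hf
    have e : Prod.fst ⁻¹' (Set.Ici x) = S := by ext p; simp [hSdef]
    rw [← hfst, setIntegral_map measurableSet_Ici hf.aestronglyMeasurable
      measurable_fst.aemeasurable, e]
  have hθint : ∀ f : ℝ → ℝ, Continuous f → ∫ s, f s ∂θ = ∫ p in S, f p.2 ∂P := fun f hf =>
    integral_map measurable_snd.aemeasurable hf.aestronglyMeasurable
  have hνint : ∀ f : ℝ → ℝ, Continuous f → ∫ s, f s ∂ν = ∫ p, f p.2 ∂P := by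
    intro f hf
    rw [← hsnd]
    exact integral_map measurable_snd.aemeasurable hf.aestronglyMeasurable
  have hcd : CDOrder (μ.restrict (Set.Ici x)) θ := by
    intro φ hc ha hl
    rw [hμint φ hc.continuous_of_univ, hθint φ hc.continuous_of_univ]
    exact supermartingale_jensen hX hY hS hc ha hl measurableSet_Ici
  refine ⟨⟨isFiniteMeasure_of_le ν hθν, hν.2.mono_measure hθν⟩, hcd, hθν, ?_⟩
  intro θ' hθ' hcd' hle' φ hc ha hl
  have := hθ'.1
  have hΓae : ∀ᵐ p ∂P, p ∈ Γ := hPΓ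
  rcases (lowerTargets Γ x).eq_empty_or_nonempty with hB | hB
  · -- no mass starts below `x`, so `θ'` has the full mass of `ν`
    have hmass : 1 ≤ θ'.real Set.univ := by
      have h1' := hcd' (fun _ => 1) (convexOn_const _ convex_univ) antitone_const
        ⟨1, fun x => by simp⟩
      have e : P.restrict S = P := by
        refine Measure.restrict_eq_self_of_ae_mem ?_
        filter_upwards [hΓae] with p hp
        refine ⟨?_, mem_univ _⟩
        by_contra hlt
        have : p.2 ∈ lowerTargets Γ x := ⟨p.1, not_le.1 hlt, hp⟩
        simp [hB] at this
      rw [hμint _ continuous_const, e, ← hνint (fun _ => (1 : ℝ)) continuous_const] at h1'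
      simpa using h1'
    have e' : θ' = ν := measure_eq_of_le_of_univ hle' (by simpa using hmass)
    have e : θ = ν := by
      refine measure_eq_of_le_of_univ hθν ?_
      have := hcd (fun _ => 1) (convexOn_const _ convex_univ) antitone_const
        ⟨1, fun x => by simp⟩
      have h3 := hcd' (fun _ => -1) (convexOn_const _ convex_univ) antitone_const
        ⟨1, fun x => by simp⟩
      simp only [integral_const, smul_eq_mul, mul_one, mul_neg] at this h3
      have : ν.real Set.univ = 1 := by simp
      linarith
    rw [e, e']
  · have hK := contactSet_unbounded Γ x
    have hmem := envelope_mem hK hc ha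
    have hlψ := envelope_linearGrowth hK hc ha hl
    have hφ := hc.continuous_of_univ
    have hψ := hmem.1.continuous_of_univ
    have hint := envelope_integral_eq hM hnd h1 h2 hX hY hPΓ hPM hB hc ha hl
    have hge := le_envelope hK (self_mem_minorants (K := contactSet Γ x) hc ha)
    set ψ := envelope (contactSet Γ x) φ with hψdef
    have hφY := hl.integrable hφ hY
    have hψY := hlψ.integrable hψ hY
    -- `φ = ψ - (ψ - φ)`, where `ψ - φ ≥ 0` is carried, under `ν`, by `θ` alone
    have s1 : ∫ y, (ψ y - φ y) ∂θ' ≤ ∫ y, (ψ y - φ y) ∂ν :=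
      integral_mono_measure hle' (ae_of_all _ fun y => sub_nonneg.2 (hge y))
        ((hlψ.integrable hψ hν.2).sub (hl.integrable hφ hν.2))
    have s2 : ∫ y, (ψ y - φ y) ∂ν = ∫ p in S, (ψ p.2 - φ p.2) ∂P := by
      rw [hνint (fun y => ψ y - φ y) (hψ.sub hφ)]
      refine (setIntegral_eq_integral_of_ae_compl_eq_zero ?_).symm
      filter_upwards [hΓae] with p hp hpS
      have hpx : p.1 < x := by
        by_contra hlt
        exact hpS ⟨not_lt.1 hlt, mem_univ _⟩
      have := hmem.2.2 p.2 (Or.inl ⟨p.1, hpx, hp⟩)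
      exact sub_eq_zero.2 (le_antisymm this (hge _))
    have s3 := hcd' ψ hmem.1 hmem.2.1 hlψ
    rw [hμint ψ hψ] at s3
    rw [integral_sub (hlψ.integrable hψ hθ'.2) (hl.integrable hφ hθ'.2)] at s1
    rw [integral_sub hψY.integrableOn hφY.integrableOn] at s2
    rw [hθint φ hφ]
    linarith
end
end

section
/- Let μ ≤_cd ν be probability measures on ℝ with finite first moments and let P→ be the Increasing Supermartingale Transport. Then there exist Borel sets Γ ⊆ ℝ² and M ⊆ ℝ such that the pair (Γ,M) is nondegenerate, first-order right-monotone, and second-order left-monotone, P→ is concentrated on Γ, and P→|_{M×ℝ} is a martingale. -/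
/-!
Disintegrate `P` as `μ(ds) κ_s(dy)`. The set `Γ` consists of the pairs `(s, y)` with `y` in the
topological support of `κ_s` and `s` outside a null set, and `M` is the set of `s` at which `κ_s` has
barycentre `s`. The supermartingale property gives barycentre at most `s` almost everywhere, which
yields nondegeneracy, and `P` is a martingale on `M × ℝ` by construction.

For monotonicity, the image of `(-∞, x]` under `P` is a shadow, hence minimal in convex-decreasing order
among the admissible measures below `ν`. Redirecting part of the transport from `(-∞, x]` to mass of `ν`
that is reached only from beyond `x` produces another admissible measure as long as all barycentres
stay at most `s`; comparing the two is `swap_inequality`. Two choices of exchange suffice.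
Contracting mass from `(-∞, a)` and `(b, ∞)` into `(a, b)` shows that if sources beyond `x` reach
`(a, b)`, then almost no source up to `x` charges both sides (`second_order_dichotomy`). Moving mass
from `(-∞, a)` to `(a, ∞)` shows that if sources beyond `x` reach `(a, ∞)`, then almost no source up
to `x` outside `M` charges `(-∞, a)` (`first_order_dichotomy`).

Since supports are tested on open intervals, every violation of monotonicity by `Γ` is witnessed by
rational interval endpoints and a rational number separating the two sources, so countably many null
sets have to be discarded.
-/

open MeasureTheory Set
open scoped ENNReal

noncomputable section

/-! ### Convex nonincreasing functions -/

lemma exists_subgradient {φ : ℝ → ℝ} (hc : ConvexOn ℝ Set.univ φ) (ha : Antitone φ) (s : ℝ) :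
    ∃ g : ℝ, g ≤ 0 ∧ ∀ y, φ s + g * (y - s) ≤ φ y := by
  have hs : s ∈ interior (Set.univ : Set ℝ) := by simp
  have hsub : ∀ y, φ s + derivWithin φ (Ioi s) s * (y - s) ≤ φ y := by
    intro y
    rcases lt_trichotomy y s with h | h | h
    · have h1 := hc.slope_le_leftDeriv_of_mem_interior (mem_univ y) hs h
      have h2 := hc.leftDeriv_le_rightDeriv_of_mem_interior hs
      have h3 := h1.trans h2
      rw [slope_def_field, div_le_iff₀ (by linarith)] at h3
      linarith
    · simp [h]
    · have h1 := hc.rightDeriv_le_slope_of_mem_interior hs (mem_univ y) h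
      rw [slope_def_field, le_div_iff₀ (by linarith)] at h1
      linarith
  refine ⟨_, ?_, hsub⟩
  have h1 := hsub (s + 1)
  have h2 := ha (show s ≤ s + 1 by linarith)
  linarith

lemma LinearGrowth.integrable_s6 {φ : ℝ → ℝ} (hl : LinearGrowth φ) (ha : Antitone φ)
    {α : Type*} [MeasurableSpace α] {Q : Measure α} [IsFiniteMeasure Q] {f : α → ℝ}
    (hf : Measurable f) (hi : Integrable f Q) : Integrable (fun p => φ (f p)) Q := by
  obtain ⟨C, hC⟩ := hl
  refine Integrable.mono' (g := fun p => C * (1 + |f p|))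
    (((integrable_const 1).add hi.abs).const_mul C)
    (ha.measurable.comp hf).aestronglyMeasurable (ae_of_all _ fun p => hC _)

/-! ### The exchange inequality -/

/-- The part of the second marginal of `P` transported from `S`. -/
def imageOf (P : Measure (ℝ × ℝ)) (S : Set ℝ) : Measure ℝ :=
  (P.restrict (S ×ˢ Set.univ)).map Prod.snd

lemma bdd_mul_integrable {α : Type*} [MeasurableSpace α] {Q : Measure α} {l f : α → ℝ}
    (hl : Measurable l) (h0 : ∀ p, 0 ≤ l p) (h1 : ∀ p, l p ≤ 1) (hf : Integrable f Q) :
    Integrable (fun p => l p * f p) Q := by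
  refine hf.bdd_mul (c := 1) hl.aestronglyMeasurable (ae_of_all _ fun p => ?_)
  rw [Real.norm_eq_abs, abs_of_nonneg (h0 p)]; exact h1 p

/-- The exchange inequality, which carries the proof. Let `ρ` be a part of the image of the sources
beyond `x`. Withdraw the fraction `ρ(ℝ) · l` of the transport from `(-∞, x]` and send the withdrawn
mass to a multiple of `ρ` instead. Hypothesis `hb` says that the modified kernel still has barycentre
at most `s`, so by Jensen its image dominates `μ|_{(-∞, x]}` in convex-decreasing order. It is also
dominated setwise by the second marginal, so minimality of the shadow bounds the mean of `φ` over the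
withdrawn mass by its mean over `ρ`. -/
lemma swap_inequality (P : Measure (ℝ × ℝ)) [IsProbabilityMeasure P]
    (h2 : Integrable (fun p : ℝ × ℝ => p.2) P)
    (h1 : Integrable (fun p : ℝ × ℝ => p.1) P) (x : ℝ)
    (hsh : IsShadow (P.fst.restrict (Iic x)) P.snd (imageOf P (Iic x)))
    (ρ : Measure ℝ) (hρ : ρ ≤ imageOf P (Ioi x))
    (l : ℝ × ℝ → ℝ) (hl : Measurable l) (hl0 : ∀ p, 0 ≤ l p) (hl1 : ∀ p, l p ≤ 1)
    (hb : ∀ᵐ s ∂P.fst, s ≤ x →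
      ∫ y, (y + l (s, y) * ((∫ z, z ∂ρ) - ρ.real univ * y)) ∂(P.condKernel s) ≤ s)
    (φ : ℝ → ℝ) (hc : ConvexOn ℝ Set.univ φ) (ha : Antitone φ) (hg : LinearGrowth φ) :
    ρ.real univ * ∫ p in Iic x ×ˢ univ, l p * φ p.2 ∂P ≤
      (∫ p in Iic x ×ˢ univ, l p ∂P) * ∫ z, φ z ∂ρ := by
  set Q := P.restrict (Iic x ×ˢ univ) with hQ
  set r := ρ.real univ with hr
  have him : ∀ S, (imageOf P S) univ ≤ 1 := fun S => by
    rw [imageOf, Measure.map_apply measurable_snd .univ]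
    exact (Measure.restrict_le_self _).trans prob_le_one
  have hρ1 : ρ univ ≤ 1 := (hρ univ).trans (him _)
  have : IsFiniteMeasure ρ := ⟨hρ1.trans_lt ENNReal.one_lt_top⟩
  have hr0 : 0 ≤ r := measureReal_nonneg
  have hr1 : r ≤ 1 := ENNReal.toReal_le_of_le_ofReal zero_le_one (by simpa using hρ1)
  have hρi : Integrable (fun z : ℝ => z) ρ := by
    refine Integrable.mono_measure ?_ hρ
    rw [imageOf, integrable_map_measure (f := Prod.snd) (g := fun z : ℝ => z)
      measurable_id.aestronglyMeasurable measurable_snd.aemeasurable]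
    exact h2.restrict
  have h2Q : Integrable (fun p : ℝ × ℝ => p.2) Q := h2.restrict
  have hlQ : Integrable l Q := by
    simpa using bdd_mul_integrable (Q := Q) hl hl0 hl1 (integrable_const 1)
  set W := ∫ p, l p ∂Q with hW
  have hW0 : 0 ≤ W := integral_nonneg hl0
  have hW1 : W ≤ 1 := by
    have : W ≤ ∫ p, (1 : ℝ) ∂Q := integral_mono hlQ (integrable_const 1) hl1
    refine this.trans ?_
    simp only [integral_const, smul_eq_mul, mul_one]
    exact ENNReal.toReal_le_of_le_ofReal zero_le_one
      (by simpa [Q] using prob_le_one (μ := P))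
  set d : ℝ × ℝ → ℝ≥0∞ := fun p => ENNReal.ofReal (1 - r * l p) with hd
  have hdm : Measurable d := (measurable_const.sub (hl.const_mul r)).ennreal_ofReal
  have hrl : ∀ p, 0 ≤ 1 - r * l p := fun p => by nlinarith [hl0 p, hl1 p]
  have hd1 : ∀ p, d p ≤ 1 := fun p => by
    rw [hd]; simpa using mul_nonneg hr0 (hl0 p)
  have hdt : ∀ p, (d p).toReal = 1 - r * l p := fun p => ENNReal.toReal_ofReal (hrl p)
  set η : Measure ℝ := (Q.withDensity d).map Prod.snd with hη
  have hηle : η ≤ imageOf P (Iic x) := by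
    refine Measure.map_mono ?_ measurable_snd
    calc Q.withDensity d ≤ Q.withDensity 1 := withDensity_mono (ae_of_all _ hd1)
      _ = Q := withDensity_one
  have : IsFiniteMeasure η := ⟨((hηle univ).trans (him _)).trans_lt ENNReal.one_lt_top⟩
  have hηint : ∀ f : ℝ → ℝ, Measurable f → Integrable (fun p : ℝ × ℝ => f p.2) Q →
      Integrable f η ∧ ∫ z, f z ∂η = ∫ p, (1 - r * l p) * f p.2 ∂Q := by
    intro f hf hi
    constructor
    · refine Integrable.mono_measure ?_ hηle
      rw [imageOf, integrable_map_measure hf.aestronglyMeasurable measurable_snd.aemeasurable]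
      exact hi
    · rw [hη, integral_map measurable_snd.aemeasurable hf.aestronglyMeasurable,
        integral_withDensity_eq_integral_toReal_smul hdm
          (ae_of_all _ fun p => (hd1 p).trans_lt ENNReal.one_lt_top)]
      simp only [hdt, smul_eq_mul]
  -- `θ` is the image of the modified transport, a competitor for the shadow. The total withdrawn
  -- mass is `r * W`, and `W • ρ` has that mass.
  set θ : Measure ℝ := η + ENNReal.ofReal W • ρ with hθ
  have hWρ : ENNReal.ofReal W • ρ ≤ ρ := by
    intro A
    rw [Measure.smul_apply, smul_eq_mul]
    exact mul_le_of_le_one_left zero_le (ENNReal.ofReal_le_one.2 hW1)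
  have : IsFiniteMeasure (ENNReal.ofReal W • ρ) :=
    ⟨((hWρ univ).trans hρ1).trans_lt ENNReal.one_lt_top⟩
  have hθint : ∀ f : ℝ → ℝ, Measurable f → Integrable (fun p : ℝ × ℝ => f p.2) Q →
      Integrable f ρ → Integrable f θ ∧
      ∫ z, f z ∂θ = ∫ p, (1 - r * l p) * f p.2 ∂Q + W * ∫ z, f z ∂ρ := by
    intro f hf hi hfρ
    obtain ⟨e1, e2⟩ := hηint f hf hi
    have e3 : Integrable f (ENNReal.ofReal W • ρ) := hfρ.mono_measure hWρ
    refine ⟨e1.add_measure e3, ?_⟩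
    rw [hθ, integral_add_measure e1 e3, e2, integral_smul_measure, ENNReal.toReal_ofReal hW0,
      smul_eq_mul]
  have hθfm : FiniteFirstMoment θ :=
    ⟨inferInstance, (hθint (fun z => z) measurable_id h2Q hρi).1⟩
  have hsplit : imageOf P (Iic x) + imageOf P (Ioi x) = P.snd := by
    rw [imageOf, imageOf, ← Measure.map_add _ _ measurable_snd, Measure.snd]
    congr 1
    have : (Ioi x ×ˢ univ : Set (ℝ × ℝ)) = (Iic x ×ˢ univ)ᶜ := by ext; simp
    rw [this, Measure.restrict_add_restrict_compl (measurableSet_Iic.prod .univ)]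
  have hθle : θ ≤ P.snd := by
    rw [← hsplit]
    exact add_le_add hηle (hWρ.trans hρ)
  have hval : ∀ ψ : ℝ → ℝ, Antitone ψ → LinearGrowth ψ →
      ∫ z, ψ z ∂θ = ∫ p, ((1 - r * l p) * ψ p.2 + l p * ∫ z, ψ z ∂ρ) ∂Q := by
    intro ψ hψa hψg
    rw [(hθint ψ hψa.measurable (hψg.integrable_s6 hψa measurable_snd h2Q)
      (hψg.integrable_s6 hψa measurable_id hρi)).2, integral_add, integral_mul_const]
    · have := hψg.integrable_s6 hψa measurable_snd h2Q
      have h3 := this.sub ((bdd_mul_integrable hl hl0 hl1 this).const_mul r)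
      refine h3.congr (ae_of_all _ fun p => ?_)
      simp only [Pi.sub_apply]; ring
    · exact hlQ.mul_const _
  have hθcd : CDOrder (P.fst.restrict (Iic x)) θ := by
    intro ψ hψc hψa hψg
    rw [hval ψ hψa hψg]
    set R := ∫ z, ψ z ∂ρ with hR
    have hψ2 : Integrable (fun p : ℝ × ℝ => ψ p.2) P := hψg.integrable_s6 hψa measurable_snd h2
    have hFi : Integrable (fun p : ℝ × ℝ => (1 - r * l p) * ψ p.2 + l p * R) P := by
      have h3 := (hψ2.sub ((bdd_mul_integrable hl hl0 hl1 hψ2).const_mul r)).add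
        (bdd_mul_integrable hl hl0 hl1 (integrable_const (μ := P) R))
      refine h3.congr (ae_of_all _ fun p => ?_)
      simp only [Pi.sub_apply, Pi.add_apply]; ring
    have hF := Measure.setIntegral_condKernel_univ_right (ρ := P) (measurableSet_Iic (a := x))
      hFi.integrableOn
    rw [hQ, ← hF]
    have hψ1 : Integrable ψ P.fst := by
      rw [Measure.fst, integrable_map_measure hψa.measurable.aestronglyMeasurable
        measurable_fst.aemeasurable]
      exact hψg.integrable_s6 hψa measurable_fst h1
    refine integral_mono_ae hψ1.restrict hFi.integral_condKernel.restrict ?_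
    rw [Filter.EventuallyLE, ae_restrict_iff' measurableSet_Iic]
    filter_upwards [hb, h2.condKernel_ae, hFi.condKernel_ae] with s hbs his hFs hsx
    -- Jensen for the modified kernel at `s`, through a supporting line of slope `g ≤ 0`.
    obtain ⟨g, hg0, hgs⟩ := exists_subgradient hψc hψa s
    have hbs' := hbs hsx
    have hls : Measurable fun y => l (s, y) := hl.comp measurable_prodMk_left
    have hbi : Integrable (fun y => y + l (s, y) * ((∫ z, z ∂ρ) - r * y)) (P.condKernel s) :=
      his.add (bdd_mul_integrable hls (fun y => hl0 _) (fun y => hl1 _)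
        ((integrable_const _).sub (his.const_mul r)))
    have hRle : r * ψ s + g * ((∫ z, z ∂ρ) - r * s) ≤ R := by
      have : ∫ z, (ψ s + g * (z - s)) ∂ρ ≤ R :=
        integral_mono ((integrable_const _).add ((hρi.sub (integrable_const _)).const_mul g))
          (hψg.integrable_s6 hψa measurable_id hρi) hgs
      have hzs : Integrable (fun z => z - s) ρ := hρi.sub (integrable_const _)
      rw [integral_add (integrable_const _) (hzs.const_mul g),
        integral_const_mul, integral_sub hρi (integrable_const _)] at this
      simpa using this
    have hmono : ∫ y, (ψ s - g * s + g * (y + l (s, y) * ((∫ z, z ∂ρ) - r * y)))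
        ∂(P.condKernel s) ≤ ∫ y, ((1 - r * l (s, y)) * ψ y + l (s, y) * R) ∂(P.condKernel s) := by
      refine integral_mono ((integrable_const _).add (hbi.const_mul g)) hFs fun y => ?_
      have e1 := mul_le_mul_of_nonneg_left (hgs y) (hrl (s, y))
      have e2 := mul_le_mul_of_nonneg_left hRle (hl0 (s, y))
      simp only
      nlinarith
    refine le_trans ?_ hmono
    rw [integral_add (integrable_const _) (hbi.const_mul g), integral_const_mul]
    simp only [integral_const, probReal_univ, one_smul]
    nlinarith [mul_le_mul_of_nonpos_left hbs' hg0]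
  have hmin := hsh.2.2.2 θ hθfm hθcd hθle φ hc ha hg
  have hφQ : Integrable (fun p : ℝ × ℝ => φ p.2) Q := hg.integrable_s6 ha measurable_snd h2Q
  rw [(hθint φ ha.measurable hφQ (hg.integrable_s6 ha measurable_id hρi)).2, imageOf,
    integral_map measurable_snd.aemeasurable ha.measurable.aestronglyMeasurable] at hmin
  have hlφ := bdd_mul_integrable hl hl0 hl1 hφQ
  have : ∫ p, (1 - r * l p) * φ p.2 ∂Q = ∫ p, φ p.2 ∂Q - r * ∫ p, l p * φ p.2 ∂Q := by
    rw [← integral_const_mul, ← integral_sub hφQ (hlφ.const_mul r)]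
    congr 1; ext p; ring
  rw [this] at hmin
  linarith

/-! ### Consequences of the exchange inequality -/

lemma measure_eq_zero_of_setIntegral_eq_zero {k : Measure ℝ} {S : Set ℝ} (hS : MeasurableSet S)
    {f : ℝ → ℝ} (hpos : ∀ y ∈ S, 0 < f y) (hi : Integrable f k)
    (h : ∫ y in S, f y ∂k = 0) : k S = 0 := by
  rw [integral_eq_zero_iff_of_nonneg_ae _ hi.restrict] at h
  · rw [Filter.EventuallyEq, ae_restrict_iff' hS] at h
    rw [measure_eq_zero_iff_ae_notMem]
    filter_upwards [h] with y hy hyS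
    exact (hpos y hyS).ne' (hy hyS)
  · rw [Filter.EventuallyLE, ae_restrict_iff' hS]
    exact ae_of_all _ fun y hy => (hpos y hy).le

lemma measurable_setIntegral_kernel (P : Measure (ℝ × ℝ)) [IsFiniteMeasure P] {S : Set ℝ}
    (hS : MeasurableSet S) {f : ℝ → ℝ} (hf : Measurable f) :
    Measurable fun s => ∫ y in S, f y ∂(P.condKernel s) := by
  simp_rw [← integral_indicator hS]
  exact (StronglyMeasurable.integral_kernel (hf.indicator hS).stronglyMeasurable).measurable

lemma put_convex (a : ℝ) : ConvexOn ℝ Set.univ (fun y : ℝ => max (a - y) 0) := by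
  refine ConvexOn.sup ?_ (convexOn_const 0 convex_univ)
  exact (convexOn_const a convex_univ).sub (concaveOn_id convex_univ)

lemma put_antitone (a : ℝ) : Antitone (fun y : ℝ => max (a - y) 0) :=
  fun _ _ h => max_le_max (by linarith) le_rfl

lemma put_linearGrowth (a : ℝ) : LinearGrowth (fun y : ℝ => max (a - y) 0) := by
  refine ⟨|a| + 1, fun y => ?_⟩
  rw [abs_of_nonneg (le_max_right _ _)]
  have h1 := le_abs_self a
  have h2 := neg_abs_le y
  have h3 := abs_nonneg a
  have h4 := abs_nonneg y
  refine max_le ?_ ?_ <;> nlinarith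

/-- A nonnegative function whose integral over `(-∞, x] × ℝ` is at most zero vanishes almost
everywhere there, stated fibrewise. -/
lemma ae_fibre_eq_zero (P : Measure (ℝ × ℝ)) [IsFiniteMeasure P] (x : ℝ) {F : ℝ × ℝ → ℝ}
    (hF : Integrable F P) (h0 : ∀ p, 0 ≤ F p) (h : ∫ p in Iic x ×ˢ univ, F p ∂P ≤ 0) :
    ∀ᵐ s ∂P.fst, s ≤ x → ∀ᵐ y ∂(P.condKernel s), F (s, y) = 0 := by
  have h' := (integral_eq_zero_iff_of_nonneg h0 hF.restrict).1
    (le_antisymm h (integral_nonneg h0))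
  rw [Filter.EventuallyEq, ae_restrict_iff' (measurableSet_Iic.prod .univ)] at h'
  rw [← P.disintegrate P.condKernel] at h'
  filter_upwards [Measure.ae_ae_of_ae_compProd h'] with s hs hsx
  filter_upwards [hs] with y hy
  exact hy ⟨hsx, mem_univ _⟩

/-- If sources beyond `x` send mass into `(a, b)`, then almost no source up to `x` charges both sides
of `(a, b)`: otherwise mass could be contracted from both sides into `(a, b)` without changing the
barycentres. -/
lemma second_order_dichotomy (P : Measure (ℝ × ℝ)) [IsProbabilityMeasure P]
    (h2 : Integrable (fun p : ℝ × ℝ => p.2) P)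
    (h1 : Integrable (fun p : ℝ × ℝ => p.1) P) (x : ℝ)
    (hsh : IsShadow (P.fst.restrict (Iic x)) P.snd (imageOf P (Iic x)))
    (hsm : ∀ᵐ s ∂P.fst, ∫ y, y ∂(P.condKernel s) ≤ s) (a b : ℝ)
    (hne : imageOf P (Ioi x) (Ioo a b) ≠ 0) :
    ∀ᵐ s ∂P.fst, s ≤ x → P.condKernel s (Iio a) = 0 ∨ P.condKernel s (Ioi b) = 0 := by
  have : IsFiniteMeasure (imageOf P (Ioi x)) := by unfold imageOf; infer_instance
  set ρ := (imageOf P (Ioi x)).restrict (Ioo a b) with hρ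
  set r := ρ.real univ with hr
  set m := ∫ z, z ∂ρ with hm
  have hr0 : 0 < r := by
    rw [hr, measureReal_def, hρ, Measure.restrict_apply_univ]
    exact ENNReal.toReal_pos hne (measure_ne_top _ _)
  have hρi : Integrable (fun z : ℝ => z) ρ := by
    refine Integrable.restrict ?_
    rw [imageOf, integrable_map_measure (f := Prod.snd) (g := fun z : ℝ => z)
      measurable_id.aestronglyMeasurable measurable_snd.aemeasurable]
    exact h2.restrict
  have hρab : ∀ᵐ z ∂ρ, z ∈ Ioo a b := ae_restrict_mem measurableSet_Ioo
  have hma : r * a ≤ m := by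
    have : ∫ _, a ∂ρ ≤ m := integral_mono_ae (integrable_const a) hρi
      (hρab.mono fun z hz => hz.1.le)
    simpa using this
  have hmb : m ≤ r * b := by
    have : m ≤ ∫ _, b ∂ρ := integral_mono_ae hρi (integrable_const b)
      (hρab.mono fun z hz => hz.2.le)
    simpa using this
  have hpos1 : ∀ y ∈ Iio a, 0 < m - r * y := fun y hy => by
    have := mul_lt_mul_of_pos_left (mem_Iio.1 hy) hr0
    linarith
  have hpos2 : ∀ y ∈ Ioi b, 0 < r * y - m := fun y hy => by
    have := mul_lt_mul_of_pos_left (mem_Ioi.1 hy) hr0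
    linarith
  set I₁ : ℝ → ℝ := fun s => ∫ y in Iio a, (m - r * y) ∂(P.condKernel s) with hI₁
  set I₂ : ℝ → ℝ := fun s => ∫ y in Ioi b, (r * y - m) ∂(P.condKernel s) with hI₂
  have hI₁m : Measurable I₁ := measurable_setIntegral_kernel P measurableSet_Iio (by fun_prop)
  have hI₂m : Measurable I₂ := measurable_setIntegral_kernel P measurableSet_Ioi (by fun_prop)
  have hI₁0 : ∀ s, 0 ≤ I₁ s := fun s =>
    setIntegral_nonneg measurableSet_Iio fun y hy => (hpos1 y hy).le
  have hI₂0 : ∀ s, 0 ≤ I₂ s := fun s =>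
    setIntegral_nonneg measurableSet_Ioi fun y hy => (hpos2 y hy).le
  -- The weights satisfy `c₁ * I₁ = c₂ * I₂`, so that the exchange preserves every barycentre; the
  -- summand `1` keeps the denominator positive.
  set c₁ : ℝ → ℝ := fun s => I₂ s / (1 + I₁ s + I₂ s) with hc₁
  set c₂ : ℝ → ℝ := fun s => I₁ s / (1 + I₁ s + I₂ s) with hc₂
  have hden : ∀ s, 0 < 1 + I₁ s + I₂ s := fun s => by linarith [hI₁0 s, hI₂0 s]
  have hc₁0 : ∀ s, 0 ≤ c₁ s := fun s => div_nonneg (hI₂0 s) (hden s).le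
  have hc₂0 : ∀ s, 0 ≤ c₂ s := fun s => div_nonneg (hI₁0 s) (hden s).le
  have hc12 : ∀ s, c₁ s + c₂ s ≤ 1 := fun s => by
    rw [hc₁, hc₂]
    simp only
    rw [← add_div, div_le_one (hden s)]
    linarith
  set l : ℝ × ℝ → ℝ := fun p => (Iio a).indicator (fun _ => c₁ p.1) p.2 +
    (Ioi b).indicator (fun _ => c₂ p.1) p.2 with hl
  have hlm : Measurable l := by
    have e1 : Measurable fun p : ℝ × ℝ => (Iio a).indicator (fun _ => c₁ p.1) p.2 :=
      Measurable.indicator (s := Prod.snd ⁻¹' Iio a) (f := fun p : ℝ × ℝ => c₁ p.1)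
        (by fun_prop) (measurable_snd measurableSet_Iio)
    have e2 : Measurable fun p : ℝ × ℝ => (Ioi b).indicator (fun _ => c₂ p.1) p.2 :=
      Measurable.indicator (s := Prod.snd ⁻¹' Ioi b) (f := fun p : ℝ × ℝ => c₂ p.1)
        (by fun_prop) (measurable_snd measurableSet_Ioi)
    exact e1.add e2
  have hl0 : ∀ p, 0 ≤ l p := fun p =>
    add_nonneg (indicator_nonneg (fun _ _ => hc₁0 _) _) (indicator_nonneg (fun _ _ => hc₂0 _) _)
  have hl1 : ∀ p, l p ≤ 1 := fun p => by
    refine le_trans (add_le_add ?_ ?_) (hc12 p.1)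
    · exact indicator_le_self' (fun _ _ => hc₁0 _) _
    · exact indicator_le_self' (fun _ _ => hc₂0 _) _
  have hbal : ∀ s, Integrable (fun y : ℝ => y) (P.condKernel s) →
      ∫ y, l (s, y) * (m - r * y) ∂(P.condKernel s) = 0 := by
    intro s hs
    have hi : Integrable (fun y : ℝ => m - r * y) (P.condKernel s) :=
      (integrable_const _).sub (hs.const_mul r)
    have e : (fun y => l (s, y) * (m - r * y)) = fun y =>
        (Iio a).indicator (fun y => c₁ s * (m - r * y)) y +
        (Ioi b).indicator (fun y => c₂ s * (m - r * y)) y := by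
      ext y
      simp only [hl, indicator_apply]
      split_ifs <;> ring
    rw [e, integral_add ((hi.const_mul _).indicator measurableSet_Iio)
      ((hi.const_mul _).indicator measurableSet_Ioi), integral_indicator measurableSet_Iio,
      integral_indicator measurableSet_Ioi, integral_const_mul, integral_const_mul]
    have e2 : ∫ y in Ioi b, (m - r * y) ∂(P.condKernel s) = - I₂ s := by
      rw [hI₂]
      simp only
      rw [← integral_neg]
      congr 1; ext y; ring
    rw [e2]
    change c₁ s * I₁ s + c₂ s * -I₂ s = 0
    simp only [hc₁, hc₂]
    ring
  have hb : ∀ᵐ s ∂P.fst, s ≤ x →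
      ∫ y, (y + l (s, y) * (m - r * y)) ∂(P.condKernel s) ≤ s := by
    filter_upwards [hsm, h2.condKernel_ae] with s hs his _
    rw [integral_add his, hbal s his, add_zero]
    · exact hs
    · exact bdd_mul_integrable (hlm.comp measurable_prodMk_left) (fun y => hl0 _) (fun y => hl1 _)
        ((integrable_const _).sub (his.const_mul r))
  have key := swap_inequality P h2 h1 x hsh ρ Measure.restrict_le_self l hlm hl0 hl1 hb
    (fun y => max (b - y) 0) (put_convex b) (put_antitone b) (put_linearGrowth b)
  have hφρ : ∫ z, max (b - z) 0 ∂ρ = r * b - m := by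
    have : ∫ z, max (b - z) 0 ∂ρ = ∫ z, (b - z) ∂ρ :=
      integral_congr_ae (hρab.mono fun z hz => max_eq_left (by linarith [hz.2]))
    rw [this, integral_sub (integrable_const _) hρi]
    simp [hr, hm]
  rw [hφρ] at key
  have hφP : Integrable (fun p : ℝ × ℝ => max (b - p.2) 0) P :=
    (put_linearGrowth b).integrable_s6 (put_antitone b) measurable_snd h2
  have hlφ := bdd_mul_integrable hlm hl0 hl1 hφP
  have hmr : Integrable (fun p : ℝ × ℝ => m - r * p.2) P :=
    (integrable_const _).sub (h2.const_mul r)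
  have hlmr := bdd_mul_integrable hlm hl0 hl1 hmr
  have hli : Integrable l P := by
    simpa using bdd_mul_integrable (Q := P) hlm hl0 hl1 (integrable_const 1)
  have hbalP : ∫ p in Iic x ×ˢ univ, l p * (m - r * p.2) ∂P = 0 := by
    rw [← Measure.setIntegral_condKernel_univ_right (ρ := P) (measurableSet_Iic (a := x))
      hlmr.integrableOn]
    refine integral_eq_zero_of_ae (ae_restrict_of_ae ?_)
    filter_upwards [h2.condKernel_ae] with s his
    exact hbal s his
  -- `φ(y) = (b - y)⁺` agrees with the line `b - y` up to `b` and exceeds it beyond, so `F` measures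
  -- the withdrawn mass in `(b, ∞)`.
  set F : ℝ × ℝ → ℝ := fun p => r * (l p * max (b - p.2) 0) - l p * (r * b - m)
    - l p * (m - r * p.2) with hF
  have hFi : Integrable F P := ((hlφ.const_mul r).sub (hli.mul_const _)).sub hlmr
  have hFeq : ∀ p, F p = r * l p * (max (b - p.2) 0 - (b - p.2)) := fun p => by
    rw [hF]; ring
  have hF0 : ∀ p, 0 ≤ F p := fun p => by
    rw [hFeq]
    exact mul_nonneg (mul_nonneg hr0.le (hl0 p)) (sub_nonneg.2 (le_max_left _ _))
  have hFint : ∫ p in Iic x ×ˢ univ, F p ∂P ≤ 0 := by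
    have hd : Integrable (fun p => r * (l p * max (b - p.2) 0) - l p * (r * b - m)) P :=
      (hlφ.const_mul r).sub (hli.mul_const _)
    simp only [hF]
    rw [integral_sub hd.restrict hlmr.restrict,
      integral_sub (hlφ.const_mul r).restrict (hli.mul_const _).restrict, integral_const_mul,
      integral_mul_const, hbalP]
    linarith
  filter_upwards [ae_fibre_eq_zero P x hFi hF0 hFint, h2.condKernel_ae] with s hs his hsx
  by_cases hz : I₁ s = 0
  · left
    exact measure_eq_zero_of_setIntegral_eq_zero measurableSet_Iio hpos1
      ((integrable_const _).sub (his.const_mul r)) hz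
  · right
    rw [measure_eq_zero_iff_ae_notMem]
    filter_upwards [hs hsx] with y hy hyb
    have hyb' : b < y := hyb
    have hc : 0 < c₂ s := div_pos (lt_of_le_of_ne (hI₁0 s) (Ne.symm hz)) (hden s)
    have hlp : 0 < l (s, y) := by
      refine add_pos_of_nonneg_of_pos (indicator_nonneg (fun _ _ => hc₁0 _) _) ?_
      simp only [indicator_of_mem hyb, hc]
    rw [hFeq, max_eq_right (by simp only; linarith)] at hy
    have := mul_pos (mul_pos hr0 hlp) (show 0 < 0 - (b - y) by linarith)
    exact this.ne' hy

/-- If sources beyond `x` send mass into `(a, ∞)`, then almost every source up to `x` that charges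
`(-∞, a)` is transported as a martingale: otherwise the slack in its barycentre would allow mass to be
moved from `(-∞, a)` to `(a, ∞)`. -/
lemma first_order_dichotomy (P : Measure (ℝ × ℝ)) [IsProbabilityMeasure P]
    (h2 : Integrable (fun p : ℝ × ℝ => p.2) P)
    (h1 : Integrable (fun p : ℝ × ℝ => p.1) P) (x : ℝ)
    (hsh : IsShadow (P.fst.restrict (Iic x)) P.snd (imageOf P (Iic x)))
    (hsm : ∀ᵐ s ∂P.fst, ∫ y, y ∂(P.condKernel s) ≤ s) (a : ℝ)
    (hne : imageOf P (Ioi x) (Ioi a) ≠ 0) :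
    ∀ᵐ s ∂P.fst, s ≤ x → P.condKernel s (Iio a) = 0 ∨ ∫ y, y ∂(P.condKernel s) = s := by
  have : IsFiniteMeasure (imageOf P (Ioi x)) := by unfold imageOf; infer_instance
  set ρ := (imageOf P (Ioi x)).restrict (Ioi a) with hρ
  set r := ρ.real univ with hr
  set m := ∫ z, z ∂ρ with hm
  have hr0 : 0 < r := by
    rw [hr, measureReal_def, hρ, Measure.restrict_apply_univ]
    exact ENNReal.toReal_pos hne (measure_ne_top _ _)
  have hρi : Integrable (fun z : ℝ => z) ρ := by
    refine Integrable.restrict ?_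
    rw [imageOf, integrable_map_measure (f := Prod.snd) (g := fun z : ℝ => z)
      measurable_id.aestronglyMeasurable measurable_snd.aemeasurable]
    exact h2.restrict
  have hρa : ∀ᵐ z ∂ρ, z ∈ Ioi a := ae_restrict_mem measurableSet_Ioi
  have hma : r * a ≤ m := by
    have : ∫ _, a ∂ρ ≤ m := integral_mono_ae (integrable_const a) hρi
      (hρa.mono fun z hz => (mem_Ioi.1 hz).le)
    simpa using this
  have hpos1 : ∀ y ∈ Iio a, 0 < m - r * y := fun y hy => by
    have := mul_lt_mul_of_pos_left (mem_Iio.1 hy) hr0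
    linarith
  set I₁ : ℝ → ℝ := fun s => ∫ y in Iio a, (m - r * y) ∂(P.condKernel s) with hI₁
  set D : ℝ → ℝ := fun s => max (s - ∫ y, y ∂(P.condKernel s)) 0 with hD
  have hI₁m : Measurable I₁ := measurable_setIntegral_kernel P measurableSet_Iio (by fun_prop)
  have hDm : Measurable D := by
    have : Measurable fun s => ∫ y, y ∂(P.condKernel s) := by
      simpa using measurable_setIntegral_kernel P .univ measurable_id
    exact (measurable_id.sub this).max measurable_const
  have hI₁0 : ∀ s, 0 ≤ I₁ s := fun s =>
    setIntegral_nonneg measurableSet_Iio fun y hy => (hpos1 y hy).le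
  have hD0 : ∀ s, 0 ≤ D s := fun s => le_max_right _ _
  -- The weight is chosen so that the exchange uses at most the slack `D`, that is `c * I₁ ≤ D`.
  set c : ℝ → ℝ := fun s => D s / (1 + I₁ s + D s) with hc
  have hden : ∀ s, 0 < 1 + I₁ s + D s := fun s => by linarith [hI₁0 s, hD0 s]
  have hc0 : ∀ s, 0 ≤ c s := fun s => div_nonneg (hD0 s) (hden s).le
  have hc1 : ∀ s, c s ≤ 1 := fun s => by
    rw [hc]; simp only
    rw [div_le_one (hden s)]; linarith [hI₁0 s]
  have hcI : ∀ s, c s * I₁ s ≤ D s := fun s => by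
    rw [hc]; simp only
    rw [div_mul_eq_mul_div, div_le_iff₀ (hden s)]
    nlinarith [hI₁0 s, hD0 s]
  set l : ℝ × ℝ → ℝ := fun p => (Iio a).indicator (fun _ => c p.1) p.2 with hl
  have hlm : Measurable l :=
    Measurable.indicator (s := Prod.snd ⁻¹' Iio a) (f := fun p : ℝ × ℝ => c p.1)
      (by fun_prop) (measurable_snd measurableSet_Iio)
  have hl0 : ∀ p, 0 ≤ l p := fun p => indicator_nonneg (fun _ _ => hc0 _) _
  have hl1 : ∀ p, l p ≤ 1 := fun p =>
    (indicator_le_self' (fun _ _ => hc0 _) _).trans (hc1 p.1)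
  have hb : ∀ᵐ s ∂P.fst, s ≤ x →
      ∫ y, (y + l (s, y) * (m - r * y)) ∂(P.condKernel s) ≤ s := by
    filter_upwards [hsm, h2.condKernel_ae] with s hs his _
    have hi : Integrable (fun y : ℝ => m - r * y) (P.condKernel s) :=
      (integrable_const _).sub (his.const_mul r)
    have hli : Integrable (fun y => l (s, y) * (m - r * y)) (P.condKernel s) :=
      bdd_mul_integrable (hlm.comp measurable_prodMk_left) (fun y => hl0 _) (fun y => hl1 _) hi
    rw [integral_add his hli]
    have e : (fun y => l (s, y) * (m - r * y)) = fun y =>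
        (Iio a).indicator (fun y => c s * (m - r * y)) y := by
      ext y
      simp only [hl, indicator_apply]
      split_ifs <;> ring
    rw [e, integral_indicator measurableSet_Iio, integral_const_mul]
    have h3 := hcI s
    have h4 : D s = s - ∫ y, y ∂(P.condKernel s) := max_eq_left (by linarith)
    rw [h4] at h3
    change _ + c s * I₁ s ≤ s
    linarith
  have key := swap_inequality P h2 h1 x hsh ρ Measure.restrict_le_self l hlm hl0 hl1 hb
    (fun y => max (a - y) 0) (put_convex a) (put_antitone a) (put_linearGrowth a)
  have hφρ : ∫ z, max (a - z) 0 ∂ρ = 0 :=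
    integral_eq_zero_of_ae (hρa.mono fun z hz => max_eq_right (by linarith [mem_Ioi.1 hz]))
  rw [hφρ, mul_zero] at key
  have hφP : Integrable (fun p : ℝ × ℝ => max (a - p.2) 0) P :=
    (put_linearGrowth a).integrable_s6 (put_antitone a) measurable_snd h2
  have hlφ := bdd_mul_integrable hlm hl0 hl1 hφP
  have key' : ∫ p in Iic x ×ˢ univ, l p * max (a - p.2) 0 ∂P ≤ 0 :=
    nonpos_of_mul_nonpos_right key hr0
  filter_upwards [ae_fibre_eq_zero P x hlφ
    (fun p => mul_nonneg (hl0 p) (le_max_right _ _)) key', hsm] with s hs hss hsx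
  by_cases hz : ∫ y, y ∂(P.condKernel s) = s
  · exact Or.inr hz
  · left
    rw [measure_eq_zero_iff_ae_notMem]
    filter_upwards [hs hsx] with y hy hya
    have hya' : y < a := hya
    have hDs : 0 < D s := lt_max_of_lt_left (sub_pos.2 (lt_of_le_of_ne hss hz))
    have hlp : 0 < l (s, y) := by
      simp only [hl, indicator_of_mem hya]
      exact div_pos hDs (hden s)
    exact (mul_pos hlp (lt_max_of_lt_left (sub_pos.2 hya'))).ne' hy

/-! ### Supports of the kernel -/

lemma mem_support_iff_rat {k : Measure ℝ} {y : ℝ} :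
    y ∈ k.support ↔ ∀ a b : ℚ, y ∈ Ioo (a : ℝ) b → k (Ioo (a : ℝ) b) ≠ 0 := by
  rw [Measure.mem_support_iff_forall]
  constructor
  · intro h a b hy
    exact (h _ (Ioo_mem_nhds hy.1 hy.2)).ne'
  · intro h U hU
    obtain ⟨c, d, hy, hcd⟩ := mem_nhds_iff_exists_Ioo_subset.1 hU
    obtain ⟨a, ha1, ha2⟩ := exists_rat_btwn hy.1
    obtain ⟨b, hb1, hb2⟩ := exists_rat_btwn hy.2
    exact (pos_iff_ne_zero.2 (h a b ⟨ha2, hb1⟩)).trans_le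
      (measure_mono ((Ioo_subset_Ioo ha1.le hb2.le).trans hcd))

lemma measure_ne_zero_of_mem_support {k : Measure ℝ} {y : ℝ} (hy : y ∈ k.support) {U : Set ℝ}
    (hU : IsOpen U) (hyU : y ∈ U) : k U ≠ 0 :=
  ((Measure.mem_support_iff_forall y).1 hy U (hU.mem_nhds hyU)).ne'

lemma measurableSet_kernel_support (P : Measure (ℝ × ℝ)) [IsFiniteMeasure P] :
    MeasurableSet {p : ℝ × ℝ | p.2 ∈ (P.condKernel p.1).support} := by
  simp_rw [mem_support_iff_rat, ofPred_forall]
  refine MeasurableSet.iInter fun a => MeasurableSet.iInter fun b => ?_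
  have h1 : MeasurableSet {p : ℝ × ℝ | p.2 ∈ Ioo (a : ℝ) b} := measurable_snd measurableSet_Ioo
  have h2 : MeasurableSet {p : ℝ × ℝ | P.condKernel p.1 (Ioo (a : ℝ) b) ≠ 0} :=
    ((P.condKernel.measurable_coe measurableSet_Ioo).comp measurable_fst)
      (measurableSet_singleton 0).compl
  exact h1.imp h2

/-- A probability measure with barycentre at most `x` that charges `(x, ∞)` has a support point
below `x`. -/
lemma exists_support_lt {k : Measure ℝ} [IsProbabilityMeasure k] (hi : Integrable (fun y : ℝ => y) k)
    {x : ℝ} (hb : ∫ y, y ∂k ≤ x) (hx : k (Ioi x) ≠ 0) : ∃ y' < x, y' ∈ k.support := by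
  suffices h : k (Iio x) ≠ 0 by
    obtain ⟨y', h1, h2⟩ := Measure.nonempty_inter_support_of_pos (pos_iff_ne_zero.2 h)
    exact ⟨y', h1, h2⟩
  intro h
  have h0 : 0 ≤ᵐ[k] fun y => y - x := by
    filter_upwards [measure_eq_zero_iff_ae_notMem.1 h] with y hy
    simpa using hy
  have hi' : Integrable (fun y => y - x) k := hi.sub (integrable_const x)
  have h1 : ∫ y, (y - x) ∂k = 0 := by
    refine le_antisymm ?_ (integral_nonneg_of_ae h0)
    rw [integral_sub hi (integrable_const x)]
    simpa using hb
  have h2 := (integral_eq_zero_iff_of_nonneg_ae h0 hi').1 h1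
  refine hx (measure_eq_zero_iff_ae_notMem.2 ?_)
  filter_upwards [h2] with y hy hxy
  have hxy' : x < y := hxy
  simp only [Pi.zero_apply] at hy
  linarith

/-- A probability measure with barycentre at least `x` that charges `(-∞, x)` has a support point
above `x`. -/
lemma exists_support_gt {k : Measure ℝ} [IsProbabilityMeasure k] (hi : Integrable (fun y : ℝ => y) k)
    {x : ℝ} (hb : x ≤ ∫ y, y ∂k) (hx : k (Iio x) ≠ 0) : ∃ y' > x, y' ∈ k.support := by
  suffices h : k (Ioi x) ≠ 0 by
    obtain ⟨y', h1, h2⟩ := Measure.nonempty_inter_support_of_pos (pos_iff_ne_zero.2 h)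
    exact ⟨y', h1, h2⟩
  intro h
  have h0 : 0 ≤ᵐ[k] fun y => x - y := by
    filter_upwards [measure_eq_zero_iff_ae_notMem.1 h] with y hy
    simpa using hy
  have hi' : Integrable (fun y => x - y) k := (integrable_const x).sub hi
  have h1 : ∫ y, (x - y) ∂k = 0 := by
    refine le_antisymm ?_ (integral_nonneg_of_ae h0)
    rw [integral_sub (integrable_const x) hi]
    simpa using hb
  have h2 := (integral_eq_zero_iff_of_nonneg_ae h0 hi').1 h1
  refine hx (measure_eq_zero_iff_ae_notMem.2 ?_)
  filter_upwards [h2] with y hy hxy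
  have hxy' : y < x := hxy
  simp only [Pi.zero_apply] at hy
  linarith

lemma imageOf_apply (P : Measure (ℝ × ℝ)) {S A : Set ℝ} (hA : MeasurableSet A) :
    imageOf P S A = P (S ×ˢ A) := by
  rw [imageOf, Measure.map_apply measurable_snd hA,
    Measure.restrict_apply (measurable_snd hA)]
  congr 1
  ext p
  simp [and_comm]

lemma ae_kernel_eq_zero (P : Measure (ℝ × ℝ)) [IsFiniteMeasure P] {x : ℝ} {J : Set ℝ}
    (hJ : MeasurableSet J) (h : imageOf P (Ioi x) J = 0) :
    ∀ᵐ s ∂P.fst, x < s → P.condKernel s J = 0 := by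
  rw [imageOf_apply P hJ, measure_eq_zero_iff_ae_notMem, ← P.disintegrate P.condKernel] at h
  filter_upwards [Measure.ae_ae_of_ae_compProd h] with s hs hxs
  rw [measure_eq_zero_iff_ae_notMem]
  filter_upwards [hs] with y hy hyJ
  exact hy ⟨hxs, hyJ⟩

lemma ae_bary_le (P : Measure (ℝ × ℝ)) [IsFiniteMeasure P]
    (h2 : Integrable (fun p : ℝ × ℝ => p.2) P) (h1 : Integrable (fun p : ℝ × ℝ => p.1) P)
    (hP : SupermartingaleProperty P) : ∀ᵐ s ∂P.fst, ∫ y, y ∂(P.condKernel s) ≤ s := by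
  have h1' : Integrable (fun s : ℝ => s) P.fst := by
    rw [Measure.fst, integrable_map_measure (f := Prod.fst) (g := fun z : ℝ => z)
      measurable_id.aestronglyMeasurable measurable_fst.aemeasurable]
    exact h1
  refine ae_le_of_forall_setIntegral_le h2.integral_condKernel h1' fun A hA _ => ?_
  have e2 := Measure.setIntegral_condKernel_univ_right (ρ := P) hA h2.integrableOn
  have e1 := Measure.setIntegral_condKernel_univ_right (ρ := P) hA h1.integrableOn
  have := hP A hA
  rw [← e1, ← e2] at this
  simpa using this

/-! ### The theorem -/

/-- Corollary 9.6. The Increasing Supermartingale Transport is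
concentrated on a nondegenerate, first-order right-monotone, second-order left-monotone
pair of Borel sets `(Γ,M)` and is a martingale on `M × ℝ`. -/
theorem increasing_transport_monotone_support
    (μ ν : Measure ℝ) (hμp : IsProbabilityMeasure μ) (hνp : IsProbabilityMeasure ν)
    (hμ : FiniteFirstMoment μ) (hν : FiniteFirstMoment ν) (h : CDOrder μ ν)
    (P : Measure (ℝ × ℝ)) (hP : IsIncreasingSMT μ ν P) :
    ∃ Γ : Set (ℝ × ℝ), ∃ M : Set ℝ,
      MeasurableSet Γ ∧ MeasurableSet M ∧ Nondegenerate Γ M ∧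
      FirstOrderRightMonotone Γ M ∧ SecondOrderLeftMonotone Γ ∧
      P Γᶜ = 0 ∧ MartingaleOn P M := by
  obtain ⟨⟨⟨hfst, hsnd⟩, hsup⟩, hshadow⟩ := hP
  have hPp : IsProbabilityMeasure P := by
    refine ⟨?_⟩
    have : (P.map Prod.fst) univ = 1 := by rw [hfst]; exact measure_univ
    rwa [Measure.map_apply measurable_fst .univ, preimage_univ] at this
  have h1 : Integrable (fun p : ℝ × ℝ => p.1) P := by
    have := hμ.2
    rw [← hfst] at this
    exact (integrable_map_measure (f := Prod.fst) (g := fun z : ℝ => z)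
      measurable_id.aestronglyMeasurable measurable_fst.aemeasurable).1 this
  have h2 : Integrable (fun p : ℝ × ℝ => p.2) P := by
    have := hν.2
    rw [← hsnd] at this
    exact (integrable_map_measure (f := Prod.snd) (g := fun z : ℝ => z)
      measurable_id.aestronglyMeasurable measurable_snd.aemeasurable).1 this
  have hsh : ∀ x : ℝ, IsShadow (P.fst.restrict (Iic x)) P.snd (imageOf P (Iic x)) := by
    intro x
    obtain ⟨θ, hθ, hA⟩ := hshadow x
    have : imageOf P (Iic x) = θ := Measure.ext fun A hAm => by
      rw [imageOf_apply P hAm, hA A hAm]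
    rw [this, Measure.fst, Measure.snd, hfst, hsnd]
    exact hθ
  have hsm := ae_bary_le P h2 h1 hsup
  -- The monotonicity violations are excluded one rational interval and one rational separator `q`
  -- at a time. The null set of bad sources lies up to `q` or beyond `q`, according to whether mass
  -- from beyond `q` reaches the interval.
  have hsecond : ∀ᵐ (s : ℝ) ∂P.fst, ∀ a b q : ℚ,
      (imageOf P (Ioi (q : ℝ)) (Ioo (a : ℝ) (b : ℝ)) = 0 →
        q < s → P.condKernel s (Ioo (a : ℝ) (b : ℝ)) = 0) ∧
      (imageOf P (Ioi (q : ℝ)) (Ioo (a : ℝ) (b : ℝ)) ≠ 0 →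
        s ≤ q → P.condKernel s (Iio (a : ℝ)) = 0 ∨ P.condKernel s (Ioi (b : ℝ)) = 0) := by
    simp_rw [ae_all_iff]
    intro a b q
    by_cases hz : imageOf P (Ioi (q : ℝ)) (Ioo (a : ℝ) (b : ℝ)) = 0
    · filter_upwards [ae_kernel_eq_zero P measurableSet_Ioo hz] with s hs
      exact ⟨fun _ => hs, fun h => absurd hz h⟩
    · filter_upwards [second_order_dichotomy P h2 h1 q (hsh q) hsm a b hz] with s hs
      exact ⟨fun h => absurd h hz, fun _ => hs⟩
  have hfirst : ∀ᵐ (s : ℝ) ∂P.fst, ∀ a q : ℚ,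
      (imageOf P (Ioi (q : ℝ)) (Ioi (a : ℝ)) = 0 →
        q < s → P.condKernel s (Ioi (a : ℝ)) = 0) ∧
      (imageOf P (Ioi (q : ℝ)) (Ioi (a : ℝ)) ≠ 0 →
        s ≤ q → P.condKernel s (Iio (a : ℝ)) = 0 ∨ ∫ y, y ∂(P.condKernel s) = s) := by
    simp_rw [ae_all_iff]
    intro a q
    by_cases hz : imageOf P (Ioi (q : ℝ)) (Ioi (a : ℝ)) = 0
    · filter_upwards [ae_kernel_eq_zero P measurableSet_Ioi hz] with s hs
      exact ⟨fun _ => hs, fun h => absurd hz h⟩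
    · filter_upwards [first_order_dichotomy P h2 h1 q (hsh q) hsm a hz] with s hs
      exact ⟨fun h => absurd h hz, fun _ => hs⟩
  have hall := (h2.condKernel_ae.and hsm).and (hsecond.and hfirst)
  obtain ⟨N, hNsub, hNm, hN0⟩ := exists_measurable_superset_of_null (ae_iff.1 hall)
  have hgood : ∀ s ∉ N, (Integrable (fun y : ℝ => y) (P.condKernel s) ∧
      ∫ y, y ∂(P.condKernel s) ≤ s) ∧ _ := fun s hs => by
    by_contra hcon
    exact hs (hNsub hcon)
  have hbm : Measurable fun s => ∫ y, y ∂(P.condKernel s) := by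
    simpa using measurable_setIntegral_kernel P .univ measurable_id
  refine ⟨{p | p.1 ∉ N ∧ p.2 ∈ (P.condKernel p.1).support},
    {s | ∫ y, y ∂(P.condKernel s) = s}, ?_, measurableSet_eq_fun hbm measurable_id, ⟨?_, ?_⟩,
    ?_, ?_, ?_, ?_⟩
  · exact (hNm.compl.preimage measurable_fst).inter (measurableSet_kernel_support P)
  · rintro x y ⟨hxN, hy⟩ hxy
    obtain ⟨⟨hi, hb⟩, -⟩ := hgood x hxN
    obtain ⟨y', hy', hs⟩ := exists_support_lt hi hb
      (measure_ne_zero_of_mem_support hy isOpen_Ioi hxy)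
    exact ⟨y', hy', hxN, hs⟩
  · rintro x y hxM ⟨hxN, hy⟩ hxy
    obtain ⟨⟨hi, hb⟩, -⟩ := hgood x hxN
    obtain ⟨y', hy', hs⟩ := exists_support_gt hi (le_of_eq (Eq.symm hxM))
      (measure_ne_zero_of_mem_support hy isOpen_Iio hxy)
    exact ⟨y', hy', hxN, hs⟩
  · rintro x₁ y₁ x₂ y₂ ⟨hx₁, hy₁⟩ ⟨hx₂, hy₂⟩ hx hM
    by_contra! hlt
    obtain ⟨a, ha1, ha2⟩ := exists_rat_btwn hlt
    obtain ⟨q, hq1, hq2⟩ := exists_rat_btwn hx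
    by_cases hz : imageOf P (Ioi (q : ℝ)) (Ioi (a : ℝ)) = 0
    · exact measure_ne_zero_of_mem_support hy₂ isOpen_Ioi ha2
        (((hgood x₂ hx₂).2.2 a q).1 hz hq2)
    · rcases ((hgood x₁ hx₁).2.2 a q).2 hz hq1.le with h0 | h0
      · exact measure_ne_zero_of_mem_support hy₁ isOpen_Iio ha1 h0
      · exact hM h0
  · rintro x y₁ y₂ x' y' ⟨hxN, hy₁⟩ ⟨-, hy₂⟩ ⟨hxN', hy'⟩ - hx ⟨hl, hu⟩
    obtain ⟨a, ha1, ha2⟩ := exists_rat_btwn hl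
    obtain ⟨b, hb1, hb2⟩ := exists_rat_btwn hu
    obtain ⟨q, hq1, hq2⟩ := exists_rat_btwn hx
    by_cases hz : imageOf P (Ioi (q : ℝ)) (Ioo (a : ℝ) (b : ℝ)) = 0
    · exact measure_ne_zero_of_mem_support hy' isOpen_Ioo ⟨ha2, hb1⟩
        (((hgood x' hxN').2.1 a b q).1 hz hq2)
    · rcases ((hgood x hxN).2.1 a b q).2 hz hq1.le with h0 | h0
      · exact measure_ne_zero_of_mem_support hy₁ isOpen_Iio ha1 h0
      · exact measure_ne_zero_of_mem_support hy₂ isOpen_Ioi hb2 h0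
  · change ∀ᵐ p ∂P, p.1 ∉ N ∧ p.2 ∈ (P.condKernel p.1).support
    have hm : MeasurableSet {p : ℝ × ℝ | p.1 ∉ N ∧ p.2 ∈ (P.condKernel p.1).support} :=
      (hNm.compl.preimage measurable_fst).inter (measurableSet_kernel_support P)
    have key : ∀ᵐ p ∂(P.fst.compProd P.condKernel), p.1 ∉ N ∧
        p.2 ∈ (P.condKernel p.1).support := by
      rw [Measure.ae_compProd_iff hm]
      filter_upwards [measure_eq_zero_iff_ae_notMem.1 hN0] with s hs
      filter_upwards [Measure.support_mem_ae (μ := P.condKernel s)] with y hy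
      exact ⟨hs, hy⟩
    rwa [P.disintegrate P.condKernel] at key
  · intro A hA hAM
    have e2 := Measure.setIntegral_condKernel_univ_right (ρ := P) hA h2.integrableOn
    have e1 := Measure.setIntegral_condKernel_univ_right (ρ := P) hA h1.integrableOn
    rw [← e1, ← e2]
    refine setIntegral_congr_fun hA fun s hs => ?_
    have : ∫ y, y ∂(P.condKernel s) = s := hAM hs
    simpa using this
end
end

section
/- Let μ ≤_cd ν be finite Borel measures on ℝ with finite first moments, suppose the set E = {x ∈ ℝ : p_μ(x) = p_ν(x)} is nonempty and bounded above, and let x* = sup E. Then: (i) p_μ(x*) = p_ν(x*) and x* is a barrier; (ii) a point x < x* is a barrier if and only if p_μ(x) = p_ν(x); (iii) if x > x* is a barrier, then μ((x,∞)) = ν((x,∞)) = 0. -/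
/-!
For a coupling `P` write `drift P A = ∫_{A × ℝ} (s - t) dP`; the supermartingale property says that
the drift is nonnegative on every Borel set.

If the put functions touch at `x`, then for every supermartingale coupling the chain
`∫_{s ≤ x} (x - s) ≤ ∫_{s ≤ x} (x - t) ≤ ∫_{s ≤ x} (x - t)⁺ ≤ ∫ (x - t)⁺` (and the same chain with
`s < x`) consists of equalities, which forces `x` to be a barrier (`isBarrier_of_put_eq`). The set
of touching points is closed because put functions are continuous, so this applies to its
supremum `x*`. Conversely, if a coupling respects the barrier `x`, then
`drift P (-∞, x] = p_ν x - p_μ x` (`drift_Iic_of_respects`). At `x*` this drift is `0`, so it is `0`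
below every `x < x*`, and a barrier `x < x*` is a touching point.

At a barrier `x > x*` the drift below `x` is positive, hence uniformly positive on a bounded
non-null set `A` of starting points (`exists_uniform_drift`). If `μ` charged `(x, ∞)`, a small
fraction of the mass starting in `A` could exchange targets with mass starting above `x`; the
uniform drift absorbs the perturbation, so the result is again a supermartingale coupling
(`exists_exchange`). It sends mass from above `x` to below `x`, since the mass in `A` moves down on
average, and so contradicts the barrier property.

The two converse statements need some supermartingale coupling to exist. This is Strassen's theorem
(`exists_supermartingaleCoupling`), proved as follows. On functions `a s + b t` of linear growth the
functional `∫ a dμ + ∫ b dν` is nonnegative whenever `a s + b t ≥ η s * (s - t)` for some `η ≥ 0`,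
because the supremum over `s` of `η s * (s - t) - a s` is a convex nonincreasing function of `t`
between `-a` and `b` (`dual_nonneg`). M. Riesz's extension theorem extends the functional to all
continuous functions of linear growth on the plane, nonnegative on the cone of functions dominating
some `η s * (s - t)`. Tails are controlled by the marginals, so by the Riesz–Markov–Kakutani theorem
the extension is integration against a measure (`exists_representing_measure`), which is the
required coupling.
-/

open MeasureTheory Set
open scoped ENNReal

noncomputable section

/-! ### A positive functional with the prescribed marginals -/

lemma LinearGrowth.integrable_s7 {μ : Measure ℝ} (hμ : FiniteFirstMoment μ) {f : ℝ → ℝ}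
    (hf : Measurable f) (hg : LinearGrowth f) : Integrable f μ := by
  obtain ⟨C, hC⟩ := hg
  have := hμ.1
  refine Integrable.mono' (((integrable_const (1 : ℝ)).add hμ.2.abs).const_mul C)
    hf.aestronglyMeasurable (Filter.Eventually.of_forall fun x => ?_)
  simpa using hC x

/-- The dual inequality behind Strassen's theorem. The supremum over `s` of the affine functions
`t ↦ η s * (s - t) - a s` is convex and nonincreasing, and lies between `-a` and `b`; comparing
its integrals against `μ` and `ν` gives the claim. -/
lemma dual_nonneg {μ ν : Measure ℝ} (hμ : FiniteFirstMoment μ) (hν : FiniteFirstMoment ν)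
    (h : CDOrder μ ν) {a b η : ℝ → ℝ} (ha : Continuous a) (hb : Continuous b)
    (hag : LinearGrowth a) (hbg : LinearGrowth b) (hη : ∀ s, 0 ≤ η s)
    (H : ∀ s t, η s * (s - t) ≤ a s + b t) : 0 ≤ ∫ s, a s ∂μ + ∫ t, b t ∂ν := by
  set φ : ℝ → ℝ := fun t => ⨆ s, (η s * (s - t) - a s) with hφ
  have hbd : ∀ t, BddAbove (range fun s => η s * (s - t) - a s) := fun t =>
    ⟨b t, by rintro _ ⟨s, rfl⟩; have := H s t; dsimp only; linarith⟩
  have hle : ∀ s t, η s * (s - t) - a s ≤ φ t := fun s t => le_ciSup (hbd t) s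
  have hφb : ∀ t, φ t ≤ b t := fun t => ciSup_le fun s => by have := H s t; linarith
  have hφa : ∀ t, - a t ≤ φ t := fun t => by simpa using hle t t
  have hanti : Antitone φ := fun t t' htt => ciSup_le fun s => by
    have h1 := hle s t
    have h2 := mul_le_mul_of_nonneg_left htt (hη s)
    nlinarith
  have hconv : ConvexOn ℝ Set.univ φ := by
    refine ⟨convex_univ, fun x _ y _ α β hα hβ hαβ => ciSup_le fun s => ?_⟩
    have h1 := mul_le_mul_of_nonneg_left (hle s x) hα
    have h2 := mul_le_mul_of_nonneg_left (hle s y) hβ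
    have h3 : η s * (s - (α • x + β • y)) - a s
        = α * (η s * (s - x) - a s) + β * (η s * (s - y) - a s) := by
      simp only [smul_eq_mul]
      linear_combination -(η s * s - a s) * hαβ
    rw [h3]
    simpa using add_le_add h1 h2
  have hgrow : LinearGrowth φ := by
    obtain ⟨C, hC⟩ := hag
    obtain ⟨D, hD⟩ := hbg
    refine ⟨C + D, fun x => ?_⟩
    have h1 := abs_le.1 (hC x)
    have h2 := abs_le.1 (hD x)
    have h3 := abs_nonneg (a x)
    have h4 := abs_nonneg (b x)
    have h5 := hC x
    have h6 := hD x
    have h7 := hφa x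
    have h8 := hφb x
    rw [add_mul, abs_le]
    constructor <;> linarith
  have hint : ∀ {κ : Measure ℝ}, FiniteFirstMoment κ → Integrable φ κ := fun hκ =>
    hgrow.integrable_s7 hκ hanti.measurable
  have h1 : ∫ s, - a s ∂μ ≤ ∫ s, φ s ∂μ :=
    integral_mono (hag.integrable_s7 hμ ha.measurable).neg (hint hμ) hφa
  have h2 : ∫ s, φ s ∂ν ≤ ∫ s, b s ∂ν :=
    integral_mono (hint hν) (hbg.integrable_s7 hν hb.measurable) hφb
  have h3 := h φ hconv hanti hgrow
  rw [integral_neg] at h1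
  linarith

/-- The space of continuous functions on the plane of at most linear growth. -/
def GrowthSpace : Submodule ℝ (ℝ × ℝ → ℝ) where
  carrier := {F | Continuous F ∧ ∃ C : ℝ, ∀ p, |F p| ≤ C * (1 + |p.1| + |p.2|)}
  add_mem' := by
    rintro F G ⟨hF, C, hC⟩ ⟨hG, D, hD⟩
    refine ⟨hF.add hG, C + D, fun p => (abs_add_le _ _).trans ?_⟩
    rw [add_mul]
    exact add_le_add (hC p) (hD p)
  zero_mem' := ⟨continuous_const, 0, fun p => by simp⟩
  smul_mem' := by
    rintro c F ⟨hF, C, hC⟩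
    refine ⟨hF.const_smul c, |c| * C, fun p => ?_⟩
    rw [Pi.smul_apply, smul_eq_mul, abs_mul, mul_assoc]
    exact mul_le_mul_of_nonneg_left (hC p) (abs_nonneg c)

/-- The cone of functions `F` with `F (s, t) ≥ η s * (s - t)` for some `η ≥ 0`: the functions
whose integral against every supermartingale coupling is forced to be nonnegative. No
regularity of `η` is required. -/
def superCone : PointedCone ℝ GrowthSpace where
  carrier := {F | ∃ η : ℝ → ℝ, (∀ s, 0 ≤ η s) ∧ ∀ s t, η s * (s - t) ≤ F.1 (s, t)}
  add_mem' := by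
    rintro F G ⟨η, h0, h1⟩ ⟨η', h0', h1'⟩
    refine ⟨fun s => η s + η' s, fun s => add_nonneg (h0 s) (h0' s), fun s t => ?_⟩
    rw [add_mul]
    exact add_le_add (h1 s t) (h1' s t)
  zero_mem' := ⟨fun _ => 0, fun _ => le_rfl, fun s t => by simp⟩
  smul_mem' := by
    rintro c F ⟨η, h0, h1⟩
    refine ⟨fun s => c * η s, fun s => mul_nonneg c.2 (h0 s), fun s t => ?_⟩
    rw [mul_assoc]
    exact mul_le_mul_of_nonneg_left (h1 s t) c.2

/-- The functions of the form `a s + b t`. -/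
def splitSpace : Submodule ℝ GrowthSpace where
  carrier := {F | ∀ s t, F.1 (s, t) = F.1 (s, 0) + F.1 (0, t) - F.1 (0, 0)}
  add_mem' := by
    intro F G hF hG s t
    have h1 := hF s t
    have h2 := hG s t
    simp only [Submodule.coe_add, Pi.add_apply]
    linarith
  zero_mem' := fun s t => by simp
  smul_mem' := by
    intro c F hF s t
    have h1 := hF s t
    simp only [Submodule.coe_smul, Pi.smul_apply, smul_eq_mul]
    rw [h1]; ring

lemma GrowthSpace.integrable_s7 {P : Measure (ℝ × ℝ)} [IsFiniteMeasure P]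
    (h1 : Integrable (fun p : ℝ × ℝ => p.1) P) (h2 : Integrable (fun p : ℝ × ℝ => p.2) P)
    (F : GrowthSpace) : Integrable F.1 P := by
  obtain ⟨F, hF, C, hC⟩ := F
  refine Integrable.mono' ((((integrable_const (1 : ℝ)).add h1.abs).add h2.abs).const_mul C)
    hF.measurable.aestronglyMeasurable (Filter.Eventually.of_forall fun p => ?_)
  simpa using hC p

lemma growthSpace_fst {a : ℝ → ℝ} (ha : Continuous a) (hg : LinearGrowth a) :
    (fun p : ℝ × ℝ => a p.1) ∈ GrowthSpace := by
  obtain ⟨C, hC⟩ := hg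
  refine ⟨ha.comp continuous_fst, |C|, fun p => (hC p.1).trans ?_⟩
  have := abs_nonneg p.1
  have := abs_nonneg p.2
  calc C * (1 + |p.1|) ≤ |C| * (1 + |p.1|) := by gcongr; exact le_abs_self C
    _ ≤ _ := mul_le_mul_of_nonneg_left (by linarith) (abs_nonneg C)

lemma growthSpace_snd {a : ℝ → ℝ} (ha : Continuous a) (hg : LinearGrowth a) :
    (fun p : ℝ × ℝ => a p.2) ∈ GrowthSpace := by
  obtain ⟨C, hC⟩ := hg
  refine ⟨ha.comp continuous_snd, |C|, fun p => (hC p.2).trans ?_⟩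
  have := abs_nonneg p.1
  have := abs_nonneg p.2
  calc C * (1 + |p.2|) ≤ |C| * (1 + |p.2|) := by gcongr; exact le_abs_self C
    _ ≤ _ := mul_le_mul_of_nonneg_left (by linarith) (abs_nonneg C)

lemma CDOrder.measureReal_univ_eq {μ ν : Measure ℝ} (h : CDOrder μ ν) :
    μ.real univ = ν.real univ := by
  have h1 := h (fun _ => 1) (convexOn_const 1 convex_univ) antitone_const
    ⟨1, fun x => by simp⟩
  have h2 := h (fun _ => -1) (convexOn_const (-1) convex_univ) antitone_const
    ⟨1, fun x => by simp⟩
  simp only [integral_const, smul_eq_mul] at h1 h2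
  linarith

/-- The positive functional behind the existence of a supermartingale coupling: it has the
prescribed values on functions of one variable and is nonnegative on `superCone`. -/
lemma exists_functional {μ ν : Measure ℝ} (hμ : FiniteFirstMoment μ) (hν : FiniteFirstMoment ν)
    (h : CDOrder μ ν) : ∃ L : GrowthSpace →ₗ[ℝ] ℝ, (∀ F ∈ superCone, 0 ≤ L F) ∧
      ∀ (a b : ℝ → ℝ), Continuous a → Continuous b → LinearGrowth a → LinearGrowth b →
        ∀ F : GrowthSpace, (∀ s t, F.1 (s, t) = a s + b t) →
          L F = ∫ s, a s ∂μ + ∫ t, b t ∂ν := by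
  have := hμ.1
  have := hν.1
  have hmass := h.measureReal_univ_eq
  have i1 : Integrable (fun p : ℝ × ℝ => p.1) (μ.prod ν) := hμ.2.comp_fst ν
  have i2 : Integrable (fun p : ℝ × ℝ => p.2) (μ.prod ν) := hν.2.comp_snd μ
  -- On `a s + b t` the product measure gives `m * (∫ a ∂μ + ∫ b ∂ν)`, `m` the common mass.
  let I : GrowthSpace →ₗ[ℝ] ℝ :=
    { toFun := fun F => (μ.real univ)⁻¹ * ∫ p, F.1 p ∂(μ.prod ν)
      map_add' := fun F G => by
        simp only [Submodule.coe_add, Pi.add_apply]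
        rw [integral_add (GrowthSpace.integrable_s7 i1 i2 F) (GrowthSpace.integrable_s7 i1 i2 G)]
        ring
      map_smul' := fun c F => by
        simp only [Submodule.coe_smul, Pi.smul_apply, smul_eq_mul, RingHom.id_apply]
        rw [integral_const_mul]
        ring }
  have hI : ∀ (a b : ℝ → ℝ), Continuous a → Continuous b → LinearGrowth a → LinearGrowth b →
      ∀ F : GrowthSpace, (∀ s t, F.1 (s, t) = a s + b t) →
        I F = ∫ s, a s ∂μ + ∫ t, b t ∂ν := by
    intro a b ha hb hag hbg F hF
    have ia := hag.integrable_s7 hμ ha.measurable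
    have ib := hbg.integrable_s7 hν hb.measurable
    have e : F.1 = fun p : ℝ × ℝ => a p.1 + b p.2 := funext fun p => hF p.1 p.2
    change (μ.real univ)⁻¹ * ∫ p, F.1 p ∂(μ.prod ν) = _
    rw [e, integral_add (ia.comp_fst ν) (ib.comp_snd μ), integral_fun_fst, integral_fun_snd,
      ← hmass, ← smul_add, smul_eq_mul]
    by_cases hm : μ.real univ = 0
    · have hμ0 : μ = 0 := by simpa [measureReal_eq_zero_iff] using hm
      have hν0 : ν = 0 := by simpa [measureReal_eq_zero_iff] using hmass.symm.trans hm
      simp [hμ0, hν0]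
    · field_simp
  obtain ⟨L, hL, hpos⟩ := riesz_extension superCone ⟨splitSpace, I.domRestrict splitSpace⟩
    (by
      rintro ⟨F, hF⟩ ⟨η, h0, hη⟩
      have hFm := F.2
      obtain ⟨hc, C, hC⟩ := hFm
      have hga : LinearGrowth fun s => F.1 (s, 0) - F.1 (0, 0) :=
        ⟨C + |F.1 (0, 0)|, fun x => by
          have h1 := hC (x, 0)
          have h3 := abs_sub (F.1 (x, 0)) (F.1 (0, 0))
          have h4 := mul_nonneg (abs_nonneg (F.1 (0, 0))) (abs_nonneg x)
          simp only [abs_zero, add_zero] at h1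
          linarith⟩
      have hgb : LinearGrowth fun t => F.1 (0, t) := ⟨C, fun x => by simpa using hC (0, x)⟩
      have hca : Continuous fun s : ℝ => F.1 (s, 0) - F.1 (0, 0) := by fun_prop
      have hcb : Continuous fun t : ℝ => F.1 (0, t) := by fun_prop
      change 0 ≤ I F
      rw [hI _ _ hca hcb hga hgb F fun s t => by rw [hF s t]; ring]
      refine dual_nonneg hμ hν h hca hcb hga hgb h0 fun s t => ?_
      have h5 := hη s t
      have h6 := hF s t
      simp only at h5
      linarith)
    (by
      intro F
      obtain ⟨hc, C, hC⟩ := F.2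
      refine ⟨⟨⟨fun p => C * (1 + |p.1| + |p.2|), by fun_prop, |C|, fun p => ?_⟩, ?_⟩,
        fun _ => 0, fun _ => le_rfl, fun s t => ?_⟩
      · rw [abs_mul, abs_of_nonneg (by positivity : 0 ≤ 1 + |p.1| + |p.2|)]
      · intro s t
        simp only [abs_zero]
        ring
      · have h1 := (abs_le.1 (hC (s, t))).1
        simp only [Submodule.coe_add, Pi.add_apply, zero_mul]
        linarith)
  refine ⟨L, hpos, fun a b ha hb hag hbg F hF => ?_⟩
  rw [← hI a b ha hb hag hbg F hF]
  refine hL ⟨F, fun s t => ?_⟩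
  rw [hF, hF, hF, hF]
  ring

/-! ### Representation by a measure -/

/-- A continuous radial cutoff: `1` for radius `≤ n`, `0` for radius `≥ n + 1`. -/
def cutoff (n : ℕ) (r : ℝ) : ℝ := max 0 (min 1 (n + 1 - r))

lemma cutoff_nonneg (n : ℕ) (r : ℝ) : 0 ≤ cutoff n r := le_max_left _ _

lemma cutoff_le_one (n : ℕ) (r : ℝ) : cutoff n r ≤ 1 := max_le zero_le_one (min_le_left _ _)

lemma cutoff_eq_one {n : ℕ} {r : ℝ} (h : r ≤ n) : cutoff n r = 1 := by
  rw [cutoff, min_eq_left (by linarith), max_eq_right zero_le_one]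

lemma cutoff_eq_zero {n : ℕ} {r : ℝ} (h : (n : ℝ) + 1 ≤ r) : cutoff n r = 0 := by
  rw [cutoff, min_eq_right (by linarith), max_eq_left (by linarith)]

lemma continuous_cutoff (n : ℕ) : Continuous (cutoff n) := by
  unfold cutoff; fun_prop

lemma eventually_cutoff_eq_one (r : ℝ) : ∀ᶠ n in Filter.atTop, cutoff n r = 1 := by
  obtain ⟨N, hN⟩ := exists_nat_ge r
  filter_upwards [Filter.eventually_ge_atTop N] with n hn
  exact cutoff_eq_one (hN.trans (by exact_mod_cast hn))

/-- The one-variable function `s ↦ (1 + 2|s|) * (1 - cutoff n |s|)` which controls the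
contribution of large `s` to functions of linear growth. -/
def tail (n : ℕ) (s : ℝ) : ℝ := (1 + 2 * |s|) * (1 - cutoff n |s|)

lemma continuous_tail (n : ℕ) : Continuous (tail n) := by
  have := continuous_cutoff n
  unfold tail; fun_prop

lemma tail_nonneg (n : ℕ) (s : ℝ) : 0 ≤ tail n s :=
  mul_nonneg (by positivity) (by linarith [cutoff_le_one n |s|])

lemma tail_le (n : ℕ) (s : ℝ) : tail n s ≤ 1 + 2 * |s| :=
  mul_le_of_le_one_right (by positivity) (by linarith [cutoff_nonneg n |s|])

lemma linearGrowth_tail (n : ℕ) : LinearGrowth (tail n) :=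
  ⟨2, fun x => by
    rw [abs_of_nonneg (tail_nonneg n x)]
    linarith [tail_le n x]⟩

lemma tendsto_integral_tail {μ : Measure ℝ} (hμ : FiniteFirstMoment μ) :
    Filter.Tendsto (fun n => ∫ s, tail n s ∂μ) Filter.atTop (nhds 0) := by
  have := hμ.1
  have h := tendsto_integral_of_dominated_convergence (μ := μ) (F := tail) (f := fun _ => 0)
    (fun s => 1 + 2 * |s|) (fun n => (continuous_tail n).measurable.aestronglyMeasurable)
    ((integrable_const 1).add (hμ.2.abs.const_mul 2))
    (fun n => Filter.Eventually.of_forall fun s => by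
      rw [Real.norm_of_nonneg (tail_nonneg n s)]; exact tail_le n s)
    (Filter.Eventually.of_forall fun s => tendsto_const_nhds.congr' <| by
      filter_upwards [eventually_cutoff_eq_one |s|] with n hn
      simp [tail, hn])
  simpa using h

/-- Only one-variable tails are needed to control a function of linear growth outside a large
square, since there the larger of `|s|`, `|t|` dominates. -/
lemma weight_mul_le_tail (n : ℕ) (p : ℝ × ℝ) :
    (1 + |p.1| + |p.2|) * (1 - cutoff n ‖p‖) ≤ tail n p.1 + tail n p.2 := by
  have h0 := cutoff_le_one n ‖p‖
  rcases le_total |p.1| |p.2| with h | h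
  · have e : ‖p‖ = |p.2| := by rw [Prod.norm_def]; simpa using h
    have h1 := tail_nonneg n p.1
    rw [e] at h0 ⊢
    have : (1 + |p.1| + |p.2|) * (1 - cutoff n |p.2|) ≤ tail n p.2 :=
      mul_le_mul_of_nonneg_right (by linarith) (by linarith)
    linarith
  · have e : ‖p‖ = |p.1| := by rw [Prod.norm_def]; simpa using h
    have h1 := tail_nonneg n p.2
    rw [e] at h0 ⊢
    have : (1 + |p.1| + |p.2|) * (1 - cutoff n |p.1|) ≤ tail n p.1 :=
      mul_le_mul_of_nonneg_right (by linarith) (by linarith)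
    linarith

/-- The weight `1 + |s| + |t|`. -/
def weight : GrowthSpace :=
  ⟨fun p => 1 + |p.1| + |p.2|, by fun_prop, 1, fun p => by
    rw [abs_of_nonneg (by positivity), one_mul]⟩

/-- Truncation of a function of linear growth to a compactly supported one. -/
def truncate (n : ℕ) (F : GrowthSpace) : CompactlySupportedContinuousMap (ℝ × ℝ) ℝ where
  toFun := fun p => F.1 p * cutoff n ‖p‖
  continuous_toFun := F.2.1.mul ((continuous_cutoff n).comp continuous_norm)
  hasCompactSupport' := by
    refine HasCompactSupport.intro (isCompact_closedBall (0 : ℝ × ℝ) (n + 1)) fun p hp => ?_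
    rw [mem_closedBall_zero_iff, not_le] at hp
    rw [cutoff_eq_zero hp.le, mul_zero]

lemma compactlySupported_mem (f : CompactlySupportedContinuousMap (ℝ × ℝ) ℝ) :
    (f : ℝ × ℝ → ℝ) ∈ GrowthSpace := by
  obtain ⟨C, hC⟩ := f.hasCompactSupport.exists_bound_of_continuous f.continuous
  refine ⟨f.continuous, C, fun p => (hC p).trans ?_⟩
  have h0 : 0 ≤ C := (norm_nonneg _).trans (hC p)
  exact le_mul_of_one_le_right h0 (by linarith [abs_nonneg p.1, abs_nonneg p.2])

/-- A positive functional on functions of linear growth with vanishing tails is integration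
against a finite measure. -/
lemma exists_representing_measure (L : GrowthSpace →ₗ[ℝ] ℝ)
    (hpos : ∀ F : GrowthSpace, (∀ p, 0 ≤ F.1 p) → 0 ≤ L F) (T : ℕ → GrowthSpace)
    (hT : ∀ n p, weight.1 p * (1 - cutoff n ‖p‖) ≤ (T n).1 p)
    (hlim : Filter.Tendsto (fun n => L (T n)) Filter.atTop (nhds 0)) :
    ∃ P : Measure (ℝ × ℝ), IsFiniteMeasure P ∧
      ∀ F : GrowthSpace, Integrable F.1 P ∧ ∫ p, F.1 p ∂P = L F := by
  have hmono : ∀ F G : GrowthSpace, (∀ p, F.1 p ≤ G.1 p) → L F ≤ L G := fun F G hFG => by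
    have := hpos (G - F) fun p => by simpa using hFG p
    rw [map_sub] at this
    linarith
  let emb : CompactlySupportedContinuousMap (ℝ × ℝ) ℝ →ₗ[ℝ] GrowthSpace :=
    { toFun := fun f => ⟨f, compactlySupported_mem f⟩
      map_add' := fun f g => rfl
      map_smul' := fun c f => rfl }
  let Λ : CompactlySupportedContinuousMap (ℝ × ℝ) ℝ →ₚ[ℝ] ℝ :=
    PositiveLinearMap.mk₀ (L ∘ₗ emb) fun f hf => hpos _ fun p => hf p
  set P := RealRMK.rieszMeasure Λ with hP
  have hrep : ∀ f, ∫ p, f p ∂P = L (emb f) := RealRMK.integral_rieszMeasure Λ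
  have hW1 : ∀ p, 1 ≤ weight.1 p := fun p => by
    change 1 ≤ 1 + |p.1| + |p.2|
    linarith [abs_nonneg p.1, abs_nonneg p.2]
  have hWint : Integrable weight.1 P := by
    have hcov : AECover P Filter.atTop fun n : ℕ => Metric.closedBall (0 : ℝ × ℝ) n :=
      aecover_closedBall tendsto_natCast_atTop_atTop
    refine hcov.integrable_of_integral_bounded_of_nonneg_ae (L weight)
      (fun n => weight.2.1.continuousOn.integrableOn_compact (isCompact_closedBall _ _))
      (Filter.Eventually.of_forall fun p => zero_le_one.trans (hW1 p))
      (Filter.Eventually.of_forall fun n => ?_)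
    have hi : Integrable (truncate n weight) P :=
      (truncate n weight).continuous.integrable_of_hasCompactSupport
        (truncate n weight).hasCompactSupport
    calc ∫ p in Metric.closedBall (0 : ℝ × ℝ) n, weight.1 p ∂P
        = ∫ p in Metric.closedBall (0 : ℝ × ℝ) n, truncate n weight p ∂P := by
          refine setIntegral_congr_fun measurableSet_closedBall fun p hp => ?_
          rw [mem_closedBall_zero_iff] at hp
          change _ = weight.1 p * cutoff n ‖p‖
          rw [cutoff_eq_one hp, mul_one]
      _ ≤ ∫ p, truncate n weight p ∂P := setIntegral_le_integral hi
          (Filter.Eventually.of_forall fun p =>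
            mul_nonneg (zero_le_one.trans (hW1 p)) (cutoff_nonneg n _))
      _ = L (emb (truncate n weight)) := hrep _
      _ ≤ L weight := hmono _ _ fun p =>
          mul_le_of_le_one_right (zero_le_one.trans (hW1 p)) (cutoff_le_one n _)
  have hfin : IsFiniteMeasure P := by
    have h1 : Integrable (fun _ : ℝ × ℝ => (1 : ℝ)) P :=
      Integrable.mono' hWint aestronglyMeasurable_const
        (Filter.Eventually.of_forall fun p => by simpa using hW1 p)
    exact (integrable_const_iff_isFiniteMeasure one_ne_zero).1 h1
  refine ⟨P, hfin, fun F => ?_⟩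
  obtain ⟨hc, C, hC⟩ := F.2
  have hFint : Integrable F.1 P := Integrable.mono' (hWint.const_mul C)
    hc.measurable.aestronglyMeasurable (Filter.Eventually.of_forall fun p => hC p)
  refine ⟨hFint, ?_⟩
  have h1 : Filter.Tendsto (fun n => ∫ p, truncate n F p ∂P) Filter.atTop
      (nhds (∫ p, F.1 p ∂P)) := by
    refine tendsto_integral_of_dominated_convergence (fun p => |F.1 p|)
      (fun n => (truncate n F).continuous.measurable.aestronglyMeasurable) hFint.abs
      (fun n => Filter.Eventually.of_forall fun p => ?_)
      (Filter.Eventually.of_forall fun p => tendsto_const_nhds.congr' ?_)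
    · change ‖F.1 p * cutoff n ‖p‖‖ ≤ _
      rw [norm_mul, Real.norm_of_nonneg (cutoff_nonneg n _)]
      exact mul_le_of_le_one_right (norm_nonneg _) (cutoff_le_one n _)
    · filter_upwards [eventually_cutoff_eq_one ‖p‖] with n hn
      change _ = F.1 p * cutoff n ‖p‖
      rw [hn, mul_one]
  have h2 : Filter.Tendsto (fun n => ∫ p, truncate n F p ∂P) Filter.atTop (nhds (L F)) := by
    rw [tendsto_iff_dist_tendsto_zero]
    have h3 : Filter.Tendsto (fun n => |C| * L (T n)) Filter.atTop (nhds 0) := by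
      simpa using hlim.const_mul |C|
    refine squeeze_zero (fun _ => dist_nonneg) (fun n => ?_) h3
    have key : ∀ p, |F.1 p - F.1 p * cutoff n ‖p‖| ≤ |C| * (T n).1 p := fun p => by
      have h5 : 0 ≤ 1 - cutoff n ‖p‖ := by linarith [cutoff_le_one n ‖p‖]
      have e : F.1 p - F.1 p * cutoff n ‖p‖ = F.1 p * (1 - cutoff n ‖p‖) := by ring
      rw [e, abs_mul, abs_of_nonneg h5]
      calc |F.1 p| * (1 - cutoff n ‖p‖) ≤ (|C| * weight.1 p) * (1 - cutoff n ‖p‖) := by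
            refine mul_le_mul_of_nonneg_right ((hC p).trans ?_) h5
            exact mul_le_mul_of_nonneg_right (le_abs_self C) (zero_le_one.trans (hW1 p))
        _ = |C| * (weight.1 p * (1 - cutoff n ‖p‖)) := by ring
        _ ≤ _ := mul_le_mul_of_nonneg_left (hT n p) (abs_nonneg C)
    have ha := hmono (F - emb (truncate n F)) (|C| • T n) fun p => (abs_le.1 (key p)).2
    have hb := hmono (-(|C| • T n)) (F - emb (truncate n F)) fun p => (abs_le.1 (key p)).1
    simp only [map_sub, map_neg, map_smul, smul_eq_mul] at ha hb
    rw [hrep, Real.dist_eq, abs_sub_comm, abs_le]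
    exact ⟨hb, ha⟩
  exact tendsto_nhds_unique h1 h2

/-! ### Drift and existence of supermartingale couplings -/

/-- The expected downward displacement `∫_{A × ℝ} (s - t) dP` of the mass starting in `A`. -/
def drift (P : Measure (ℝ × ℝ)) (A : Set ℝ) : ℝ :=
  ∫ p in A ×ˢ (univ : Set ℝ), (p.1 - p.2) ∂P

lemma drift_union {P : Measure (ℝ × ℝ)} (hi : Integrable (fun p : ℝ × ℝ => p.1 - p.2) P)
    {A B : Set ℝ} (hAB : Disjoint A B) (hB : MeasurableSet B) :
    drift P (A ∪ B) = drift P A + drift P B := by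
  rw [drift, union_prod, setIntegral_union (hAB.set_prod_left _ _) (hB.prod MeasurableSet.univ)
    hi.integrableOn hi.integrableOn]
  rfl

/-- Nonnegativity of the drift may be tested on continuous functions of `s`. -/
lemma drift_nonneg_of_continuous {P : Measure (ℝ × ℝ)}
    (hi : Integrable (fun p : ℝ × ℝ => p.1 - p.2) P)
    (H : ∀ g : ℝ → ℝ, Continuous g → (∀ s, 0 ≤ g s) → (∀ s, g s ≤ 1) →
      0 ≤ ∫ p, g p.1 * (p.1 - p.2) ∂P) {A : Set ℝ} (hA : MeasurableSet A) : 0 ≤ drift P A := by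
  have hclosed : ∀ F : Set ℝ, IsClosed F → 0 ≤ drift P F := by
    intro F hF
    have hδ : ∀ n : ℕ, 0 < 1 / ((n : ℝ) + 1) := fun n => Nat.one_div_pos_of_nat
    have hlim := thickenedIndicator_tendsto_indicator_closure hδ
      tendsto_one_div_add_atTop_nhds_zero_nat F
    rw [tendsto_pi_nhds, hF.closure_eq] at hlim
    have hg1 : ∀ n s, ((thickenedIndicator (hδ n) F s : NNReal) : ℝ) ≤ 1 := fun n s => by
      exact_mod_cast thickenedIndicator_le_one (hδ n) F s
    have hgc : ∀ n, Continuous fun s => ((thickenedIndicator (hδ n) F s : NNReal) : ℝ) :=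
      fun n => NNReal.continuous_coe.comp (thickenedIndicator (hδ n) F).continuous
    have ht : Filter.Tendsto
        (fun n => ∫ p, ((thickenedIndicator (hδ n) F p.1 : NNReal) : ℝ) * (p.1 - p.2) ∂P)
        Filter.atTop (nhds (drift P F)) := by
      rw [drift, ← integral_indicator (hF.measurableSet.prod MeasurableSet.univ)]
      refine tendsto_integral_of_dominated_convergence (fun p => |p.1 - p.2|)
        (fun n => ?_) hi.abs (fun n => Filter.Eventually.of_forall fun p => ?_)
        (Filter.Eventually.of_forall fun p => ?_)
      · have := hgc n
        have hc : Continuous fun p : ℝ × ℝ =>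
            ((thickenedIndicator (hδ n) F p.1 : NNReal) : ℝ) * (p.1 - p.2) :=
          (this.comp continuous_fst).mul (continuous_fst.sub continuous_snd)
        exact hc.measurable.aestronglyMeasurable
      · rw [norm_mul, Real.norm_of_nonneg (NNReal.coe_nonneg _)]
        exact mul_le_of_le_one_left (norm_nonneg _) (hg1 n _)
      · have h1 := ((NNReal.continuous_coe.tendsto _).comp (hlim p.1)).mul_const (p.1 - p.2)
        have e : (F ×ˢ (univ : Set ℝ)).indicator (fun p : ℝ × ℝ => p.1 - p.2) p
            = ((F.indicator (fun _ => (1 : NNReal)) p.1 : NNReal) : ℝ) * (p.1 - p.2) := by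
          by_cases hp : p.1 ∈ F <;> simp [indicator, hp]
        rw [e]
        exact h1
    exact ge_of_tendsto' ht fun n => H _ (hgc n) (fun s => NNReal.coe_nonneg _) (hg1 n)
  have hmeas : Measurable fun p : ℝ × ℝ => p.1 - p.2 := by fun_prop
  set m := (P.withDensity fun p => ‖p.1 - p.2‖ₑ).map Prod.fst with hm
  have : IsFiniteMeasure (P.withDensity fun p => ‖p.1 - p.2‖ₑ) :=
    isFiniteMeasure_withDensity hi.2.ne
  have : IsFiniteMeasure m := by rw [hm]; infer_instance
  refine le_of_forall_pos_le_add fun ε hε => ?_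
  obtain ⟨F, hFA, hF, hlt⟩ := hA.exists_isClosed_sdiff_lt (measure_ne_top m A)
    (ENNReal.ofReal_pos.2 hε).ne'
  have hAF := hA.diff hF.measurableSet
  have h1 : drift P A = drift P F + drift P (A \ F) := by
    rw [← drift_union hi disjoint_sdiff_right hAF, union_sdiff_cancel hFA]
  have h2 : |drift P (A \ F)| ≤ ε := by
    have h3 : ‖drift P (A \ F)‖ₑ ≤ m (A \ F) := by
      refine (enorm_integral_le_lintegral_enorm _).trans ?_
      rw [hm, Measure.map_apply measurable_fst hAF, withDensity_apply _ (measurable_fst hAF)]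
      exact lintegral_mono_set fun p hp => hp.1
    have h4 := h3.trans hlt.le
    rwa [Real.enorm_eq_ofReal_abs, ENNReal.ofReal_le_ofReal_iff hε.le] at h4
  have h5 := hclosed F hF
  have h6 := (abs_le.1 h2).1
  linarith

lemma supermartingaleProperty_iff {P : Measure (ℝ × ℝ)}
    (h1 : Integrable (fun p : ℝ × ℝ => p.1) P) (h2 : Integrable (fun p : ℝ × ℝ => p.2) P) :
    SupermartingaleProperty P ↔ ∀ A, MeasurableSet A → 0 ≤ drift P A := by
  refine forall₂_congr fun A hA => ?_
  rw [drift, integral_sub h1.integrableOn h2.integrableOn, sub_nonneg]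

/-- **Strassen's theorem** for the convex-decreasing order. -/
theorem exists_supermartingaleCoupling {μ ν : Measure ℝ} (hμ : FiniteFirstMoment μ)
    (hν : FiniteFirstMoment ν) (h : CDOrder μ ν) :
    ∃ P : Measure (ℝ × ℝ), IsSupermartingaleCoupling P μ ν := by
  obtain ⟨L, hcone, hsplit⟩ := exists_functional hμ hν h
  have hgz : LinearGrowth fun _ => 0 := ⟨0, fun x => by simp⟩
  have hμf := hμ.1
  have hνf := hν.1
  let T : ℕ → GrowthSpace := fun n => ⟨fun p => tail n p.1 + tail n p.2, GrowthSpace.add_mem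
    (growthSpace_fst (continuous_tail n) (linearGrowth_tail n))
    (growthSpace_snd (continuous_tail n) (linearGrowth_tail n))⟩
  obtain ⟨P, hP, hrep⟩ := exists_representing_measure L
    (fun F hF => hcone F ⟨fun _ => 0, fun _ => le_rfl, fun s t => by simpa using hF (s, t)⟩) T
    (fun n p => weight_mul_le_tail n p) (by
      have hTn : ∀ n, L (T n) = ∫ s, tail n s ∂μ + ∫ t, tail n t ∂ν := fun n =>
        hsplit _ _ (continuous_tail n) (continuous_tail n) (linearGrowth_tail n)
          (linearGrowth_tail n) _ fun s t => rfl
      simp only [hTn]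
      simpa using (tendsto_integral_tail hμ).add (tendsto_integral_tail hν))
  have hid : LinearGrowth fun x => x := ⟨1, fun x => by simp⟩
  have i1 := (hrep ⟨_, growthSpace_fst continuous_id' hid⟩).1
  have i2 := (hrep ⟨_, growthSpace_snd continuous_id' hid⟩).1
  have hbg : ∀ f : BoundedContinuousFunction ℝ ℝ, LinearGrowth f := fun f =>
    ⟨‖f‖, fun x => (f.norm_coe_le_norm x).trans
      (le_mul_of_one_le_right (norm_nonneg f) (by linarith [abs_nonneg x]))⟩
  refine ⟨P, ⟨?_, ?_⟩, (supermartingaleProperty_iff i1 i2).2 fun A hA => ?_⟩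
  · refine ext_of_forall_integral_eq_of_IsFiniteMeasure fun f => ?_
    rw [integral_map measurable_fst.aemeasurable f.continuous.measurable.aestronglyMeasurable]
    refine (hrep ⟨_, growthSpace_fst f.continuous (hbg f)⟩).2.trans ?_
    rw [hsplit f (fun _ => 0) f.continuous continuous_const (hbg f) hgz _ fun s t => by simp]
    simp
  · refine ext_of_forall_integral_eq_of_IsFiniteMeasure fun f => ?_
    rw [integral_map measurable_snd.aemeasurable f.continuous.measurable.aestronglyMeasurable]
    refine (hrep ⟨_, growthSpace_snd f.continuous (hbg f)⟩).2.trans ?_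
    rw [hsplit (fun _ => 0) f continuous_const f.continuous hgz (hbg f) _ fun s t => by simp]
    simp
  · refine drift_nonneg_of_continuous (i1.sub i2) (fun g hg h0 h1 => ?_) hA
    have hmem : (fun p : ℝ × ℝ => g p.1 * (p.1 - p.2)) ∈ GrowthSpace := by
      refine ⟨by fun_prop, 1, fun p => ?_⟩
      rw [abs_mul, abs_of_nonneg (h0 _)]
      have := abs_sub p.1 p.2
      have := mul_le_of_le_one_left (abs_nonneg (p.1 - p.2)) (h1 p.1)
      linarith
    rw [(hrep ⟨_, hmem⟩).2]
    exact hcone _ ⟨g, h0, fun s t => le_rfl⟩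

/-! ### Put functions and barriers -/

lemma IsCoupling.isFiniteMeasure {P : Measure (ℝ × ℝ)} {μ ν : Measure ℝ} (hP : IsCoupling P μ ν)
    (hμ : FiniteFirstMoment μ) : IsFiniteMeasure P := by
  have := hμ.1
  refine ⟨?_⟩
  have h := measure_lt_top μ univ
  rwa [← hP.1, Measure.map_apply measurable_fst MeasurableSet.univ, preimage_univ] at h

lemma IsCoupling.integrable_fst {P : Measure (ℝ × ℝ)} {μ ν : Measure ℝ} (hP : IsCoupling P μ ν)
    (hμ : FiniteFirstMoment μ) : Integrable (fun p : ℝ × ℝ => p.1) P := by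
  have h := hμ.2
  rw [← hP.1] at h
  exact h.comp_measurable measurable_fst

lemma IsCoupling.integrable_snd {P : Measure (ℝ × ℝ)} {μ ν : Measure ℝ} (hP : IsCoupling P μ ν)
    (hν : FiniteFirstMoment ν) : Integrable (fun p : ℝ × ℝ => p.2) P := by
  have h := hν.2
  rw [← hP.2] at h
  exact h.comp_measurable measurable_snd

lemma IsSupermartingaleCoupling.drift_nonneg {P : Measure (ℝ × ℝ)} {μ ν : Measure ℝ}
    (hP : IsSupermartingaleCoupling P μ ν) (hμ : FiniteFirstMoment μ) (hν : FiniteFirstMoment ν)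
    {A : Set ℝ} (hA : MeasurableSet A) : 0 ≤ drift P A :=
  (supermartingaleProperty_iff (hP.1.integrable_fst hμ) (hP.1.integrable_snd hν)).1 hP.2 A hA

lemma IsCoupling.integrable_sub {P : Measure (ℝ × ℝ)} {μ ν : Measure ℝ} (hP : IsCoupling P μ ν)
    (hμ : FiniteFirstMoment μ) (hν : FiniteFirstMoment ν) :
    Integrable (fun p : ℝ × ℝ => p.1 - p.2) P :=
  (hP.integrable_fst hμ).sub (hP.integrable_snd hν)

lemma continuous_put {μ : Measure ℝ} (hμ : FiniteFirstMoment μ) : Continuous (put μ) := by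
  have := hμ.1
  have hint : ∀ x : ℝ, Integrable (fun s => max (x - s) 0) μ := fun x =>
    ((integrable_const x).sub hμ.2).pos_part
  refine (LipschitzWith.of_dist_le_mul (K := (μ univ).toNNReal) fun x y => ?_).continuous
  rw [Real.dist_eq, Real.dist_eq, put, put, ← integral_sub (hint x) (hint y), mul_comm]
  have hle : ∀ s, ‖max (x - s) 0 - max (y - s) 0‖ ≤ |x - y| := fun s => ?_
  · exact norm_integral_le_of_norm_le_const (Filter.Eventually.of_forall hle)
  refine (abs_max_sub_max_le_abs _ _ _).trans ?_
  rw [sub_sub_sub_cancel_right]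

/-- The difference of the put functions, written over a coupling. -/
lemma IsCoupling.put_sub_put {P : Measure (ℝ × ℝ)} {μ ν : Measure ℝ} (hP : IsCoupling P μ ν)
    (hμ : FiniteFirstMoment μ) (hν : FiniteFirstMoment ν) (x : ℝ) :
    Integrable (fun p : ℝ × ℝ => max (x - p.2) 0 - max (x - p.1) 0) P ∧
      ∫ p, (max (x - p.2) 0 - max (x - p.1) 0) ∂P = put ν x - put μ x := by
  have := hP.isFiniteMeasure hμ
  have j1 : Integrable (fun p : ℝ × ℝ => max (x - p.1) 0) P :=
    ((integrable_const x).sub (hP.integrable_fst hμ)).pos_part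
  have j2 : Integrable (fun p : ℝ × ℝ => max (x - p.2) 0) P :=
    ((integrable_const x).sub (hP.integrable_snd hν)).pos_part
  have hm : Measurable fun s : ℝ => max (x - s) 0 := by fun_prop
  refine ⟨j2.sub j1, ?_⟩
  rw [integral_sub j2 j1, put, put, ← hP.1, ← hP.2,
    integral_map measurable_fst.aemeasurable hm.aestronglyMeasurable,
    integral_map measurable_snd.aemeasurable hm.aestronglyMeasurable]

/-- If `P` respects the barrier `x`, then the gap between the put functions at `x` is exactly
the drift of the mass starting at or below `x`. -/
lemma drift_Iic_of_respects {P : Measure (ℝ × ℝ)} {μ ν : Measure ℝ} (hP : IsCoupling P μ ν)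
    (hμ : FiniteFirstMoment μ) (hν : FiniteFirstMoment ν) {x : ℝ}
    (hx1 : P {p : ℝ × ℝ | p.1 ≤ x ∧ x < p.2} = 0) (hx2 : P {p : ℝ × ℝ | x ≤ p.1 ∧ p.2 < x} = 0) :
    drift P (Iic x) = put ν x - put μ x := by
  rw [← (hP.put_sub_put hμ hν x).2, drift,
    ← integral_indicator (measurableSet_Iic.prod MeasurableSet.univ)]
  refine integral_congr_ae ?_
  have h1 : ∀ᵐ p ∂P, ¬ (p.1 ≤ x ∧ x < p.2) := by rw [ae_iff]; simpa using hx1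
  have h2 : ∀ᵐ p ∂P, ¬ (x ≤ p.1 ∧ p.2 < x) := by rw [ae_iff]; simpa using hx2
  filter_upwards [h1, h2] with p q1 q2
  by_cases hp : p.1 ≤ x
  · have h3 : p.2 ≤ x := not_lt.1 fun h => q1 ⟨hp, h⟩
    rw [indicator_of_mem (by exact ⟨hp, trivial⟩), max_eq_left (by linarith),
      max_eq_left (by linarith)]
    ring
  · have h3 : x ≤ p.2 := not_lt.1 fun h => q2 ⟨(not_le.1 hp).le, h⟩
    rw [indicator_of_notMem (by exact fun h => hp h.1), max_eq_right (by linarith),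
      max_eq_right (by linarith), sub_zero]

/-- When the put functions touch at `x`, the conditional Jensen inequality for `(x - t)⁺` is an
equality. Both `A = Iic x` and `A = Iio x` are needed to treat the mass starting at `x`. -/
lemma ae_eq_of_put_eq {P : Measure (ℝ × ℝ)} {μ ν : Measure ℝ}
    (hP : IsSupermartingaleCoupling P μ ν) (hμ : FiniteFirstMoment μ) (hν : FiniteFirstMoment ν)
    {x : ℝ} (hx : put μ x = put ν x) {A : Set ℝ} (hA : MeasurableSet A) (h1 : Iio x ⊆ A)
    (h2 : A ⊆ Iic x) :
    ∀ᵐ p ∂P, max (x - p.2) 0 - max (x - p.1) 0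
      = (A ×ˢ (univ : Set ℝ)).indicator (fun p => p.1 - p.2) p := by
  obtain ⟨j1, e1⟩ := hP.1.put_sub_put hμ hν x
  have j2 : Integrable ((A ×ˢ (univ : Set ℝ)).indicator fun p : ℝ × ℝ => p.1 - p.2) P :=
    (hP.1.integrable_sub hμ hν).indicator (hA.prod MeasurableSet.univ)
  have hnn : ∀ p : ℝ × ℝ, 0 ≤ max (x - p.2) 0 - max (x - p.1) 0
      - (A ×ˢ (univ : Set ℝ)).indicator (fun p => p.1 - p.2) p := by
    intro p
    by_cases hp : p.1 ∈ A
    · have h3 : p.1 ≤ x := h2 hp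
      rw [indicator_of_mem (by exact ⟨hp, trivial⟩), max_eq_left (by linarith : 0 ≤ x - p.1)]
      have := le_max_left (x - p.2) 0
      linarith
    · have h3 : x ≤ p.1 := not_lt.1 fun h => hp (h1 h)
      rw [indicator_of_notMem (by exact fun h => hp h.1), max_eq_right (by linarith : x - p.1 ≤ 0)]
      have := le_max_right (x - p.2) 0
      linarith
  have hint : ∫ p, (max (x - p.2) 0 - max (x - p.1) 0
      - (A ×ˢ (univ : Set ℝ)).indicator (fun p => p.1 - p.2) p) ∂P = 0 := by
    refine le_antisymm ?_ (integral_nonneg hnn)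
    rw [integral_sub j1 j2, e1, integral_indicator (hA.prod MeasurableSet.univ)]
    have h3 : 0 ≤ ∫ p in A ×ˢ (univ : Set ℝ), (p.1 - p.2) ∂P := hP.drift_nonneg hμ hν hA
    linarith
  rw [integral_eq_zero_iff_of_nonneg hnn (j1.sub j2)] at hint
  filter_upwards [hint] with p hp
  exact sub_eq_zero.1 hp

lemma isBarrier_of_put_eq {μ ν : Measure ℝ} (hμ : FiniteFirstMoment μ) (hν : FiniteFirstMoment ν)
    {x : ℝ} (hx : put μ x = put ν x) : IsBarrier μ ν x := by
  intro P hP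
  have h1 := ae_eq_of_put_eq hP hμ hν hx measurableSet_Iic Iio_subset_Iic_self subset_rfl
  have h2 := ae_eq_of_put_eq hP hμ hν hx measurableSet_Iio subset_rfl Iio_subset_Iic_self
  constructor
  · have h3 : ∀ᵐ p ∂P, ¬ (p.1 ≤ x ∧ x < p.2) := by
      filter_upwards [h1] with p hp hq
      rw [indicator_of_mem (by exact ⟨hq.1, trivial⟩), max_eq_right (by linarith [hq.2]),
        max_eq_left (by linarith [hq.1])] at hp
      linarith [hq.2]
    simpa [ae_iff] using h3
  · have h3 : ∀ᵐ p ∂P, ¬ (x ≤ p.1 ∧ p.2 < x) := by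
      filter_upwards [h2] with p hp hq
      rw [indicator_of_notMem (by exact fun h => absurd h.1 (not_lt.2 hq.1)),
        max_eq_left (by linarith [hq.2]), max_eq_right (by linarith [hq.1])] at hp
      linarith [hq.2]
    simpa [ae_iff] using h3

/-! ### Exchange of targets -/

/-- Positive total drift below `x` is uniformly positive on some non-null bounded set. -/
lemma exists_uniform_drift {P : Measure (ℝ × ℝ)} [IsFiniteMeasure P]
    (hi : Integrable (fun p : ℝ × ℝ => p.1 - p.2) P) {x : ℝ} (hx : 0 < drift P (Iic x)) :
    ∃ (A : Set ℝ) (K δ : ℝ), MeasurableSet A ∧ A ⊆ Icc (-K) x ∧ 0 ≤ K ∧ 0 < δ ∧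
      P.map Prod.fst A ≠ 0 ∧
      ∀ C ⊆ A, MeasurableSet C → δ * (P.map Prod.fst).real C ≤ drift P C := by
  set d : ℝ → ℝ := fun s => ∫ t, (s - t) ∂(P.condKernel s) with hd
  have hdm : Measurable d :=
    (StronglyMeasurable.integral_kernel_prod_right' (κ := P.condKernel)
      (f := fun p : ℝ × ℝ => p.1 - p.2)
      (by fun_prop : Measurable fun p : ℝ × ℝ => p.1 - p.2).stronglyMeasurable).measurable
  have hdi : Integrable d (P.map Prod.fst) := Integrable.integral_condKernel hi
  have hdrift : ∀ C, MeasurableSet C → ∫ s in C, d s ∂(P.map Prod.fst) = drift P C := fun C hC =>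
    Measure.setIntegral_condKernel_univ_right (f := fun p : ℝ × ℝ => p.1 - p.2) hC
      hi.integrableOn
  let S : ℕ → Set ℝ := fun n => {s | 1 / ((n : ℝ) + 1) ≤ d s} ∩ Icc (-(n : ℝ)) x
  have hSm : ∀ n, MeasurableSet (S n) := fun n =>
    (measurableSet_le measurable_const hdm).inter measurableSet_Icc
  by_cases hS : ∃ n, P.map Prod.fst (S n) ≠ 0
  · obtain ⟨n, hn⟩ := hS
    refine ⟨S n, n, 1 / ((n : ℝ) + 1), hSm n, inter_subset_right, n.cast_nonneg,
      Nat.one_div_pos_of_nat, hn, fun C hC hCm => ?_⟩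
    rw [← hdrift C hCm]
    exact setIntegral_ge_of_const_le_real hCm (measure_ne_top _ _) (fun s hs => (hC hs).1)
      hdi.integrableOn
  · push Not at hS
    exfalso
    have hnull : ∀ᵐ s ∂(P.map Prod.fst), ∀ n, s ∉ S n :=
      ae_all_iff.2 fun n => measure_eq_zero_iff_ae_notMem.1 (hS n)
    have hle : ∫ s in Iic x, d s ∂(P.map Prod.fst) ≤ 0 := by
      refine setIntegral_nonpos_of_ae_restrict ?_
      filter_upwards [ae_restrict_of_ae hnull, ae_restrict_mem measurableSet_Iic] with s hs hsx
      by_contra hpos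
      have hpos' : 0 < d s := not_le.1 hpos
      obtain ⟨n, hn⟩ := exists_nat_one_div_lt hpos'
      obtain ⟨k, hk⟩ := exists_nat_ge (-s)
      refine hs (max n k) ⟨?_, ?_, hsx⟩
      · refine le_trans ?_ hn.le
        have : (n : ℝ) ≤ ((max n k : ℕ) : ℝ) := by exact_mod_cast le_max_left n k
        exact one_div_le_one_div_of_le (by positivity) (by linarith)
      · have : (k : ℝ) ≤ ((max n k : ℕ) : ℝ) := by exact_mod_cast le_max_right n k
        linarith
    rw [hdrift _ measurableSet_Iic] at hle
    linarith

lemma drift_add {P Q : Measure (ℝ × ℝ)} (hi : Integrable (fun p : ℝ × ℝ => p.1 - p.2) (P + Q))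
    (C : Set ℝ) : drift (P + Q) C = drift P C + drift Q C := by
  rw [integrable_add_measure] at hi
  rw [drift, Measure.restrict_add, integral_add_measure hi.1.integrableOn hi.2.integrableOn]
  rfl

lemma drift_smul (P : Measure (ℝ × ℝ)) (c : ℝ≥0∞) (C : Set ℝ) :
    drift (c • P) C = c.toReal * drift P C := by
  rw [drift, Measure.restrict_smul, integral_smul_measure]
  rfl

lemma drift_restrict (P : Measure (ℝ × ℝ)) {C : Set ℝ} (hC : MeasurableSet C) (D : Set ℝ) :
    drift (P.restrict (D ×ˢ univ)) C = drift P (C ∩ D) := by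
  rw [drift, Measure.restrict_restrict (hC.prod MeasurableSet.univ), drift, prod_inter_prod,
    univ_inter]

/-- For an independent coupling, the drift at `s` is `β(ℝ) * s - ∫ t dβ`; a lower bound for it on
`A` integrates to a lower bound for the drift. -/
lemma drift_prod_ge {α β : Measure ℝ} [IsFiniteMeasure α] [IsFiniteMeasure β]
    (hα : Integrable (fun s => s) α) (hβ : Integrable (fun t => t) β) {A C : Set ℝ}
    (hA : MeasurableSet A) (hC : MeasurableSet C) {r : ℝ}
    (hr : ∀ s ∈ A, r ≤ β.real univ * s - ∫ t, t ∂β) :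
    r * α.real (C ∩ A) ≤ drift ((α.restrict A).prod β) C := by
  have h1 : Integrable (fun p : ℝ × ℝ => p.1 - p.2) ((α.restrict A).prod β) :=
    (hα.integrableOn.comp_fst β).sub (hβ.comp_snd _)
  have h2 : ∀ s : ℝ, ∫ t, (s - t) ∂β = β.real univ * s - ∫ t, t ∂β := fun s => by
    rw [integral_sub (integrable_const s) hβ, integral_const, smul_eq_mul]
  rw [drift, setIntegral_prod _ h1.integrableOn]
  simp only [Measure.restrict_univ, h2]
  rw [Measure.restrict_restrict hC]
  exact setIntegral_ge_of_const_le_real (hC.inter hA) (measure_ne_top _ _)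
    (fun s hs => hr s hs.2) (((hα.const_mul _).sub (integrable_const _)).integrableOn)

/-- If the mass starting in `A ⊆ [-K, x]` has drift bounded below by a
positive constant, a small fraction of it can be sent to the targets of the mass starting above
`x`, and conversely, without losing the supermartingale property. Only the second half of the exchanged mass is
recorded in the conclusion. -/
lemma exists_exchange {P : Measure (ℝ × ℝ)} {μ ν : Measure ℝ}
    (hP : IsSupermartingaleCoupling P μ ν) (hμ : FiniteFirstMoment μ) (hν : FiniteFirstMoment ν)
    {x K δ : ℝ} {A : Set ℝ} (hA : MeasurableSet A) (hAx : A ⊆ Icc (-K) x) (hK : 0 ≤ K)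
    (hδ : 0 < δ) (hdrift : ∀ C ⊆ A, MeasurableSet C → δ * μ.real C ≤ drift P C) :
    ∃ (P' : Measure (ℝ × ℝ)) (ε : ℝ≥0∞), IsSupermartingaleCoupling P' μ ν ∧ ε ≠ 0 ∧
      ε • (μ.restrict (Ioi x)).prod ((P.restrict (A ×ˢ univ)).map Prod.snd) ≤ P' := by
  have hμf := hμ.1
  have hPf := hP.1.isFiniteMeasure hμ
  have i1 := hP.1.integrable_fst hμ
  have i2 := hP.1.integrable_snd hν
  have hi := hP.1.integrable_sub hμ hν
  set B : Set ℝ := Ioi x with hBdef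
  have hB : MeasurableSet B := measurableSet_Ioi
  have hAB : Disjoint A B := Set.disjoint_left.2 fun s hs hs' => not_lt.2 (hAx hs).2 hs'
  have hsets : ∀ D : Set ℝ, MeasurableSet D → MeasurableSet (D ×ˢ (univ : Set ℝ)) :=
    fun D hD => hD.prod MeasurableSet.univ
  set νA := (P.restrict (A ×ˢ univ)).map Prod.snd with hνA
  set νB := (P.restrict (B ×ˢ univ)).map Prod.snd with hνB
  have hμD : ∀ D : Set ℝ, MeasurableSet D →
      (P.restrict (D ×ˢ univ)).map Prod.fst = μ.restrict D := fun D hD => by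
    rw [← hP.1.1, Measure.restrict_map measurable_fst hD, prod_univ]
  have hmass : ∀ D : Set ℝ, MeasurableSet D →
      (P.restrict (D ×ˢ univ)).map Prod.snd univ = μ D := fun D hD => by
    rw [Measure.map_apply measurable_snd MeasurableSet.univ, preimage_univ,
      Measure.restrict_apply_univ, ← hP.1.1, Measure.map_apply measurable_fst hD, prod_univ]
  have hmean : ∀ D : Set ℝ, ∫ t, t ∂((P.restrict (D ×ˢ univ)).map Prod.snd)
      = ∫ p in D ×ˢ univ, p.2 ∂P := fun D =>
    integral_map measurable_snd.aemeasurable measurable_id.aestronglyMeasurable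
  have hidint : ∀ D : Set ℝ,
      Integrable (fun t => t) ((P.restrict (D ×ˢ univ)).map Prod.snd) := fun D => by
    exact (integrable_map_measure (f := Prod.snd) (g := fun t : ℝ => t)
      measurable_id.aestronglyMeasurable measurable_snd.aemeasurable).2 i2.integrableOn
  set cA := μ.real A with hcA
  set cB := μ.real B with hcB
  have hcA0 : 0 ≤ cA := measureReal_nonneg
  have hcB0 : 0 ≤ cB := measureReal_nonneg
  set R : ℝ := K * cB + |∫ t, t ∂νB| with hR
  have hR0 : 0 ≤ R := by positivity
  -- The exchanged fraction `e` satisfies `e * cA ≤ 1`, `e * cB ≤ 1 / 2` and `e * R ≤ δ / 2`.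
  obtain ⟨e, he0, heA, heB, heR⟩ :
      ∃ e : ℝ, 0 < e ∧ e * cA ≤ 1 ∧ e * cB ≤ 1 / 2 ∧ e * R ≤ δ / 2 := by
    have hD : 0 < 1 + cA + cB + R := by positivity
    have hm0 : 0 < min (1 / 2) (δ / 2) := lt_min (by norm_num) (by linarith)
    have hm1 : min (1 / 2) (δ / 2) ≤ 1 / 2 := min_le_left _ _
    have hm2 : min (1 / 2) (δ / 2) ≤ δ / 2 := min_le_right _ _
    have hbd : ∀ y, y ≤ 1 + cA + cB + R →
        min (1 / 2) (δ / 2) / (1 + cA + cB + R) * y ≤ min (1 / 2) (δ / 2) := fun y hy => by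
      rw [div_mul_eq_mul_div, div_le_iff₀ hD]
      exact mul_le_mul_of_nonneg_left hy hm0.le
    exact ⟨min (1 / 2) (δ / 2) / (1 + cA + cB + R), by positivity,
      (hbd cA (by linarith)).trans (by linarith), (hbd cB (by linarith)).trans hm1,
      (hbd R (by linarith)).trans hm2⟩
  set ε := ENNReal.ofReal e with hε
  set a := ENNReal.ofReal (1 - e * cB) with ha
  set b := ENNReal.ofReal (1 - e * cA) with hb
  have hsumA : a + ε * μ B = 1 := by
    rw [ha, hε, ← ofReal_measureReal (measure_ne_top μ B), ← ENNReal.ofReal_mul he0.le,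
      ← ENNReal.ofReal_add (by linarith) (by positivity)]
    simp [hcB]
  have hsumB : b + ε * μ A = 1 := by
    rw [hb, hε, ← ofReal_measureReal (measure_ne_top μ A), ← ENNReal.ofReal_mul he0.le,
      ← ENNReal.ofReal_add (by linarith) (by positivity)]
    simp [hcA]
  set PA := P.restrict (A ×ˢ univ) with hPA
  set PB := P.restrict (B ×ˢ univ) with hPB
  set PR := P.restrict ((A ∪ B)ᶜ ×ˢ univ) with hPR
  have hdecomp : PR + PA + PB = P := by
    rw [add_assoc, hPA, hPB, ← Measure.restrict_union (hAB.set_prod_left _ _) (hsets B hB),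
      ← union_prod, add_comm, hPR]
    have : (A ∪ B)ᶜ ×ˢ (univ : Set ℝ) = ((A ∪ B) ×ˢ (univ : Set ℝ))ᶜ := by
      ext p; simp
    rw [this, Measure.restrict_add_restrict_compl (hsets _ (hA.union hB))]
  set QA := (μ.restrict A).prod νB with hQA
  set QB := (μ.restrict B).prod νA with hQB
  have habs_A : ∀ X : Measure ℝ, a • X + ε • μ B • X = X := fun X => by
    rw [smul_smul, ← add_smul, hsumA, one_smul]
  have habs_B : ∀ X : Measure ℝ, b • X + ε • μ A • X = X := fun X => by
    rw [smul_smul, ← add_smul, hsumB, one_smul]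
  have hfst : (PR + a • PA + b • PB + ε • QA + ε • QB).map Prod.fst = μ := by
    have h1 : (PR + PA + PB).map Prod.fst = μ := by rw [hdecomp]; exact hP.1.1
    have e1 : PA.map Prod.fst = μ.restrict A := hμD A hA
    have e2 : PB.map Prod.fst = μ.restrict B := hμD B hB
    simp only [Measure.map_add _ _ measurable_fst, Measure.map_smul, e1, e2, hQA, hQB,
      Measure.map_fst_prod] at h1 ⊢
    rw [hνA, hνB, hmass A hA, hmass B hB]
    calc _ = PR.map Prod.fst + (a • μ.restrict A + ε • μ B • μ.restrict A)
          + (b • μ.restrict B + ε • μ A • μ.restrict B) := by abel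
      _ = μ := by rw [habs_A, habs_B, h1]
  have hsnd : (PR + a • PA + b • PB + ε • QA + ε • QB).map Prod.snd = ν := by
    have h1 : (PR + PA + PB).map Prod.snd = ν := by rw [hdecomp]; exact hP.1.2
    simp only [Measure.map_add _ _ measurable_snd, Measure.map_smul, hQA, hQB,
      Measure.map_snd_prod, Measure.restrict_apply_univ] at h1 ⊢
    rw [← hνA, ← hνB] at h1 ⊢
    calc _ = PR.map Prod.snd + (a • νA + ε • μ B • νA) + (b • νB + ε • μ A • νB) := by abel
      _ = ν := by rw [habs_A, habs_B, h1]
  have hcoup : IsCoupling (PR + a • PA + b • PB + ε • QA + ε • QB) μ ν := ⟨hfst, hsnd⟩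
  refine ⟨PR + a • PA + b • PB + ε • QA + ε • QB, ε, ⟨hcoup, ?_⟩,
    (ENNReal.ofReal_pos.2 he0).ne', Measure.le_add_left le_rfl⟩
  refine (supermartingaleProperty_iff (hcoup.integrable_fst hμ) (hcoup.integrable_snd hν)).2
    fun C hC => ?_
  have j5 := hcoup.integrable_sub hμ hν
  have j4 := (integrable_add_measure.1 j5).1
  have j3 := (integrable_add_measure.1 j4).1
  have j2 := (integrable_add_measure.1 j3).1
  rw [drift_add j5, drift_add j4, drift_add j3, drift_add j2]
  simp only [drift_smul]
  rw [hPA, hPB, hPR, drift_restrict P hC, drift_restrict P hC, drift_restrict P hC, ha, hb, hε,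
    ENNReal.toReal_ofReal he0.le, ENNReal.toReal_ofReal (by linarith),
    ENNReal.toReal_ofReal (by linarith)]
  have d1 := hP.drift_nonneg hμ hν (hC.inter (hA.union hB).compl)
  have d2 := hdrift (C ∩ A) inter_subset_right (hC.inter hA)
  have d3 := hP.drift_nonneg hμ hν (hC.inter hB)
  have d4 : -R * μ.real (C ∩ A) ≤ drift QA C := by
    refine drift_prod_ge hμ.2 (hidint B) hA hC fun s hs => ?_
    have hr : νB.real univ = cB := by rw [measureReal_def, hνB, hmass B hB]; rfl
    rw [hr]
    have h1 := mul_le_mul_of_nonneg_left (hAx hs).1 hcB0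
    have h2 := le_abs_self (∫ t, t ∂νB)
    rw [hR]
    linarith
  have d5 : 0 * μ.real (C ∩ B) ≤ drift QB C := by
    refine drift_prod_ge hμ.2 (hidint A) hB hC fun s hs => ?_
    have hr : νA.real univ = cA := by rw [measureReal_def, hνA, hmass A hA]; rfl
    have h1 := hP.2 A hA
    have h2 : ∫ p in A ×ˢ univ, p.1 ∂P ≤ cA * x := by
      have h3 : ∫ p in A ×ˢ (univ : Set ℝ), p.1 ∂P ≤ ∫ p in A ×ˢ (univ : Set ℝ), x ∂P :=
        setIntegral_mono_on i1.integrableOn (integrable_const x).integrableOn (hsets A hA)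
          fun p hp => (hAx hp.1).2
      have h4 : P.real (A ×ˢ univ) = cA := by
        rw [hcA, ← hP.1.1, map_measureReal_apply measurable_fst hA, prod_univ]
      rwa [setIntegral_const, smul_eq_mul, h4] at h3
    have h5 := mul_le_mul_of_nonneg_left (le_of_lt hs : x ≤ s) hcA0
    rw [hr, hmean A]
    linarith
  have hm0 : 0 ≤ μ.real (C ∩ A) := measureReal_nonneg
  have f1 : δ / 2 * μ.real (C ∩ A) ≤ (1 - e * cB) * drift P (C ∩ A) := by
    have h1 : 0 ≤ drift P (C ∩ A) := le_trans (by positivity) d2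
    have h2 := mul_le_mul_of_nonneg_right (by linarith : 1 / 2 ≤ 1 - e * cB) h1
    linarith
  have f2 : 0 ≤ (1 - e * cA) * drift P (C ∩ B) := mul_nonneg (by linarith) d3
  have f3 : -(δ / 2 * μ.real (C ∩ A)) ≤ e * drift QA C := by
    have h1 := mul_le_mul_of_nonneg_left d4 he0.le
    have h2 := mul_le_mul_of_nonneg_right heR hm0
    linarith
  have f4 : 0 ≤ e * drift QB C := mul_nonneg he0.le (by linarith)
  linarith

/-- A barrier at which the put functions do not touch has no mass above it. -/
lemma no_mass_above_barrier {μ ν : Measure ℝ} (hμ : FiniteFirstMoment μ)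
    (hν : FiniteFirstMoment ν) (h : CDOrder μ ν) {x : ℝ} (hne : put μ x ≠ put ν x)
    (hbar : IsBarrier μ ν x) : μ (Ioi x) = 0 ∧ ν (Ioi x) = 0 := by
  obtain ⟨P, hP⟩ := exists_supermartingaleCoupling hμ hν h
  have hPf := hP.1.isFiniteMeasure hμ
  have hi := hP.1.integrable_sub hμ hν
  obtain ⟨b1, b2⟩ := hbar P hP
  have hx := drift_Iic_of_respects hP.1 hμ hν b1 b2
  have hpos : 0 < drift P (Iic x) := by
    refine lt_of_le_of_ne (hP.drift_nonneg hμ hν measurableSet_Iic) fun h0 => hne ?_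
    linarith
  have hμ0 : μ (Ioi x) = 0 := by
    by_contra hB
    obtain ⟨A, K, δ, hA, hAx, hK, hδ, hA0, hdrift⟩ := exists_uniform_drift hi hpos
    rw [hP.1.1] at hA0 hdrift
    obtain ⟨P', ε, hP', hε, hle⟩ := exists_exchange hP hμ hν hA hAx hK hδ hdrift
    -- The exchanged mass starting above `x` may not end below `x` ...
    have hzero : P.restrict (A ×ˢ univ) (Prod.snd ⁻¹' Iio x) = 0 := by
      have h1 : (ε • (μ.restrict (Ioi x)).prod ((P.restrict (A ×ˢ univ)).map Prod.snd))
          (Ioi x ×ˢ Iio x) = 0 := by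
        refine le_antisymm ((hle _).trans ?_) zero_le
        rw [← (hbar P' hP').2]
        exact measure_mono fun p hp => ⟨le_of_lt hp.1, hp.2⟩
      rw [Measure.smul_apply, Measure.prod_prod, Measure.restrict_apply_self, smul_eq_mul,
        Measure.map_apply measurable_snd measurableSet_Iio] at h1
      simpa [hε, hB] using h1
    have hdA : drift P A ≤ 0 := by
      refine setIntegral_nonpos_of_ae_restrict ?_
      filter_upwards [measure_eq_zero_iff_ae_notMem.1 hzero,
        ae_restrict_mem (hA.prod MeasurableSet.univ)] with p hp hpA
      have h1 : x ≤ p.2 := not_lt.1 hp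
      have h2 := (hAx hpA.1).2
      change p.1 - p.2 ≤ 0
      linarith
    have hA1 : 0 < μ.real A := ENNReal.toReal_pos hA0 (by have := hμ.1; exact measure_ne_top μ A)
    have := hdrift A subset_rfl hA
    have := mul_pos hδ hA1
    linarith
  refine ⟨hμ0, ?_⟩
  rw [← hP.1.2, Measure.map_apply measurable_snd measurableSet_Ioi]
  rw [← hP.1.1, Measure.map_apply measurable_fst measurableSet_Ioi] at hμ0
  refine measure_mono_null (fun p hp => ?_) (measure_union_null b1 hμ0)
  rcases le_or_gt p.1 x with h1 | h1
  · exact Or.inl ⟨h1, hp⟩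
  · exact Or.inr h1

/-- Proposition 3.2. With `x* = sup {x : p_μ(x) = p_ν(x)}` (assumed
nonempty and bounded above): `x*` is a barrier and the put functions touch there; a point
`x < x*` is a barrier iff the put functions touch at `x`; and any barrier `x > x*`
satisfies `μ((x,∞)) = ν((x,∞)) = 0`. -/
theorem barrier_characterization
    (μ ν : Measure ℝ) (hμ : FiniteFirstMoment μ) (hν : FiniteFirstMoment ν)
    (h : CDOrder μ ν)
    (hne : {x : ℝ | put μ x = put ν x}.Nonempty)
    (hbdd : BddAbove {x : ℝ | put μ x = put ν x}) :
    (put μ (sSup {x : ℝ | put μ x = put ν x}) =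
        put ν (sSup {x : ℝ | put μ x = put ν x}) ∧
      IsBarrier μ ν (sSup {x : ℝ | put μ x = put ν x})) ∧
    (∀ x : ℝ, x < sSup {x : ℝ | put μ x = put ν x} →
      (IsBarrier μ ν x ↔ put μ x = put ν x)) ∧
    (∀ x : ℝ, sSup {x : ℝ | put μ x = put ν x} < x → IsBarrier μ ν x →
      μ (Set.Ioi x) = 0 ∧ ν (Set.Ioi x) = 0) := by
  have hclosed : IsClosed {x : ℝ | put μ x = put ν x} :=
    isClosed_eq (continuous_put hμ) (continuous_put hν)
  have hmem := hclosed.csSup_mem hne hbdd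
  set y := sSup {x : ℝ | put μ x = put ν x} with hy
  have hyput : put μ y = put ν y := hmem
  have hybar : IsBarrier μ ν y := isBarrier_of_put_eq hμ hν hyput
  refine ⟨⟨hyput, hybar⟩, fun x hx => ⟨fun hbar => ?_, isBarrier_of_put_eq hμ hν⟩,
    fun x hx hbar => no_mass_above_barrier hμ hν h (fun heq => ?_) hbar⟩
  · obtain ⟨P, hP⟩ := exists_supermartingaleCoupling hμ hν h
    have h1 := drift_Iic_of_respects hP.1 hμ hν (hbar P hP).1 (hbar P hP).2
    have h2 := drift_Iic_of_respects hP.1 hμ hν (hybar P hP).1 (hybar P hP).2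
    -- The drift vanishes below `y`, hence also below `x`: `P` is a martingale there.
    have h3 : drift P (Iic y) = drift P (Iic x) + drift P (Ioc x y) := by
      rw [← drift_union (hP.1.integrable_sub hμ hν) (Iic_disjoint_Ioc le_rfl) measurableSet_Ioc,
        Iic_union_Ioc_eq_Iic hx.le]
    have h4 := hP.drift_nonneg hμ hν (measurableSet_Iic (a := x))
    have h5 := hP.drift_nonneg hμ hν (measurableSet_Ioc (a := x) (b := y))
    linarith
  · exact absurd (le_csSup hbdd heq) (not_le.2 hx)
end
end

section
/- Let μ ≤_cd ν be finite Borel measures on ℝ with finite first moments and let x ∈ ℝ satisfy p_μ(x) = p_ν(x). Then x is a barrier: every P ∈ S(μ,ν) satisfies P({(s,t) : s ≤ x, t > x}) = 0 and P({(s,t) : s ≥ x, t < x}) = 0. -/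
/-!
Split the first coordinate at `x`: let `A` be `Iic x` or `Iio x` and put
`g (s, t) = (x - t)⁺ - 1_A(s) (x - t)`. This is nonnegative: it is `(t - x)⁺` when `s ∈ A` and
`(x - t)⁺` when `s ∉ A`. By the supermartingale property on `A × ℝ`,
`∫ g dP ≤ p_ν(x) - ∫_{A × ℝ} (x - s) dP = p_ν(x) - p_μ(x) = 0`,
so `g = 0` almost everywhere. The choice `A = Iic x` excludes upward crossings and `A = Iio x`
excludes downward ones.
-/

open MeasureTheory Set
open scoped ENNReal

noncomputable section

/-- If the put functions touch at `x`, then almost surely mass starting in a lower half-line `A`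
with endpoint `x` (open or closed) ends in `Iic x`, and all other mass ends in `Ici x`. -/
lemma ae_noncrossing_of_put_eq {μ ν : Measure ℝ} (hμ : FiniteFirstMoment μ)
    (hν : FiniteFirstMoment ν) {x : ℝ} (hx : put μ x = put ν x) {P : Measure (ℝ × ℝ)}
    (hP : IsSupermartingaleCoupling P μ ν) {A : Set ℝ} (hA : MeasurableSet A)
    (hA₁ : Iio x ⊆ A) (hA₂ : A ⊆ Iic x) :
    ∀ᵐ p ∂P, (p.1 ∈ A → p.2 ≤ x) ∧ (p.1 ∉ A → x ≤ p.2) := by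
  obtain ⟨⟨hP₁, hP₂⟩, hsup⟩ := hP
  obtain ⟨_, hμint⟩ := hμ
  obtain ⟨_, hνint⟩ := hν
  have : IsFiniteMeasure P := by
    have : IsFiniteMeasure (P.map Prod.fst) := by rw [hP₁]; infer_instance
    exact Measure.isFiniteMeasure_of_map measurable_fst.aemeasurable
  have hfst : Integrable (fun p : ℝ × ℝ => p.1) P := by
    rw [← hP₁] at hμint
    exact hμint.comp_measurable measurable_fst
  have hsnd : Integrable (fun p : ℝ × ℝ => p.2) P := by
    rw [← hP₂] at hνint
    exact hνint.comp_measurable measurable_snd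
  have hpμ : put μ x = ∫ p, max (x - p.1) 0 ∂P := by
    rw [put, ← hP₁, integral_map measurable_fst.aemeasurable (by fun_prop)]
  have hpν : put ν x = ∫ p, max (x - p.2) 0 ∂P := by
    rw [put, ← hP₂, integral_map measurable_snd.aemeasurable (by fun_prop)]
  set B : Set (ℝ × ℝ) := A ×ˢ univ with hB
  have hBm : MeasurableSet B := hA.prod MeasurableSet.univ
  have hix : Integrable (fun p : ℝ × ℝ => x - p.1) P := (integrable_const x).sub hfst
  have hiy : Integrable (fun p : ℝ × ℝ => x - p.2) P := (integrable_const x).sub hsnd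
  have hpμ' : put μ x = ∫ p in B, (x - p.1) ∂P := by
    rw [hpμ, ← integral_indicator hBm]
    congr 1
    ext p
    by_cases hp : p.1 ∈ A
    · rw [indicator_of_mem (by simpa [hB] using hp)]
      exact max_eq_left (sub_nonneg.2 (hA₂ hp))
    · rw [indicator_of_notMem (by simpa [hB] using hp)]
      have : x ≤ p.1 := not_lt.1 fun hlt => hp (hA₁ hlt)
      exact max_eq_right (sub_nonpos.2 this)
  have hle : ∫ p in B, (x - p.1) ∂P ≤ ∫ p in B, (x - p.2) ∂P := by
    rw [integral_sub (integrable_const x) hfst.integrableOn,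
      integral_sub (integrable_const x) hsnd.integrableOn]
    exact sub_le_sub_left (hsup A hA) _
  set g : ℝ × ℝ → ℝ := fun p => max (x - p.2) 0 - B.indicator (fun p => x - p.2) p with hg
  have hg0 : 0 ≤ g := by
    intro p
    by_cases hp : p ∈ B
    · simp [hg, indicator_of_mem hp]
    · simp [hg, indicator_of_notMem hp]
  have hgi : Integrable g P := hiy.pos_part.sub (hiy.indicator hBm)
  have hgint : ∫ p, g p ∂P ≤ 0 := by
    rw [hg, integral_sub hiy.pos_part (hiy.indicator hBm), integral_indicator hBm, ← hpν, ← hx,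
      hpμ']
    linarith
  have hgz : g =ᵐ[P] 0 :=
    (integral_eq_zero_iff_of_nonneg hg0 hgi).1 (le_antisymm hgint (integral_nonneg hg0))
  filter_upwards [hgz] with p hp
  constructor
  · intro hpA
    have hpB : p ∈ B := by simpa [hB] using hpA
    simp only [hg, indicator_of_mem hpB, Pi.zero_apply] at hp
    linarith [le_max_right (x - p.2) 0]
  · intro hpA
    have hpB : p ∉ B := by simpa [hB] using hpA
    simp only [hg, indicator_of_notMem hpB, Pi.zero_apply] at hp
    linarith [le_max_left (x - p.2) 0]

/-- Lemma 3.5. If `p_μ(x) = p_ν(x)` then `x` is a barrier: no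
supermartingale coupling of `μ` and `ν` crosses `x`. -/
theorem touching_put_functions_barrier
    (μ ν : Measure ℝ) (hμ : FiniteFirstMoment μ) (hν : FiniteFirstMoment ν)
    (h : CDOrder μ ν) (x : ℝ) (hx : put μ x = put ν x) :
    ∀ P : Measure (ℝ × ℝ), IsSupermartingaleCoupling P μ ν →
      P {p : ℝ × ℝ | p.1 ≤ x ∧ x < p.2} = 0 ∧
      P {p : ℝ × ℝ | x ≤ p.1 ∧ p.2 < x} = 0 := by
  intro P hP
  constructor
  · have hae := ae_noncrossing_of_put_eq hμ hν hx hP measurableSet_Iic Iio_subset_Iic_self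
      subset_rfl
    refine measure_mono_null (fun p hp => ?_) (ae_iff.1 hae)
    exact fun hc => absurd (hc.1 hp.1) (not_le.2 hp.2)
  · have hae := ae_noncrossing_of_put_eq hμ hν hx hP measurableSet_Iio subset_rfl
      Iio_subset_Iic_self
    refine measure_mono_null (fun p hp => ?_) (ae_iff.1 hae)
    exact fun hc => absurd (hc.2 (not_lt.2 hp.1)) (not_le.2 hp.2)
end
end

section
/- Let μ ≤_cd ν be finite Borel measures on ℝ with finite first moments and let x ∈ ℝ satisfy p_μ(x) = p_ν(x). Then for every P ∈ S(μ,ν) the restriction of P to (−∞,x) × ℝ is a martingale: ∫_{A×ℝ} t dP(s,t) = ∫_{A×ℝ} s dP(s,t) for every Borel set A ⊆ (−∞,x). -/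
/-!
The defect `D(A) = ∫_{A×ℝ} (s - t) dP` of a supermartingale coupling is nonnegative and
additive in `A`, so it vanishes on every Borel subset of `(-∞, x)` once `D((-∞, x)) ≤ 0`.
The latter follows from the touching condition, since
`p_μ(x) = ∫_{s<x} (x - s) dP = ∫_{s<x} (x - t) dP - D((-∞, x))`, while
`∫_{s<x} (x - t) dP ≤ ∫ (x - t)⁺ dP = p_ν(x) = p_μ(x)`.
-/

open MeasureTheory Set
open scoped ENNReal

noncomputable section

/-- If `p_μ(x) = p_ν(x)`, then the restriction of any supermartingale
coupling `P ∈ S(μ,ν)` to `(-∞,x) × ℝ` is a martingale. -/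
theorem martingale_left_of_touching_point
    (μ ν : Measure ℝ) (hμ : FiniteFirstMoment μ) (hν : FiniteFirstMoment ν)
    (h : CDOrder μ ν) (x : ℝ) (hx : put μ x = put ν x) :
    ∀ P : Measure (ℝ × ℝ), IsSupermartingaleCoupling P μ ν →
      ∀ A : Set ℝ, MeasurableSet A → A ⊆ Set.Iio x →
        ∫ p in A ×ˢ (Set.univ : Set ℝ), p.2 ∂P =
          ∫ p in A ×ˢ (Set.univ : Set ℝ), p.1 ∂P := by
  rintro P ⟨⟨rfl, rfl⟩, hS⟩ A hA hAx
  obtain ⟨hfin, hI1⟩ := hμ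
  obtain ⟨-, hI2⟩ := hν
  have hP : IsFiniteMeasure P :=
    Measure.isFiniteMeasure_of_map measurable_fst.aemeasurable
  have i1 : Integrable (fun p : ℝ × ℝ => p.1) P := hI1.comp_measurable measurable_fst
  have i2 : Integrable (fun p : ℝ × ℝ => p.2) P := hI2.comp_measurable measurable_snd
  have hB : MeasurableSet (Iio x ×ˢ (univ : Set ℝ)) := measurableSet_Iio.prod .univ
  have hput1 : put (P.map Prod.fst) x = ∫ p in Iio x ×ˢ (univ : Set ℝ), (x - p.1) ∂P := by
    rw [put, integral_map measurable_fst.aemeasurable (by fun_prop), ← integral_indicator hB]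
    congr 1 with p
    by_cases hp : p.1 < x
    · rw [indicator_of_mem (by simpa using hp), max_eq_left (by linarith)]
    · rw [indicator_of_notMem (by simpa using hp), max_eq_right (by linarith)]
  have hput2 : ∫ p in Iio x ×ˢ (univ : Set ℝ), (x - p.2) ∂P ≤ put (P.map Prod.snd) x := by
    rw [put, integral_map measurable_snd.aemeasurable (by fun_prop), ← integral_indicator hB]
    have i3 : Integrable (fun p : ℝ × ℝ => x - p.2) P := (integrable_const x).sub i2
    refine integral_mono (i3.indicator hB) i3.pos_part fun p => ?_
    exact indicator_le_self' (fun _ _ => le_max_right _ _) p |>.trans' <|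
      indicator_le_indicator (le_max_left _ _)
  -- The touching condition closes the chain of inequalities, so the total defect on
  -- `(-∞, x) × ℝ` is nonpositive.
  have htot : ∫ p in Iio x ×ˢ (univ : Set ℝ), p.1 ∂P ≤
      ∫ p in Iio x ×ˢ (univ : Set ℝ), p.2 ∂P := by
    rw [← hx, hput1, integral_sub (integrable_const x) i2.integrableOn,
      integral_sub (integrable_const x) i1.integrableOn] at hput2
    linarith
  have hsplit : Iio x ×ˢ (univ : Set ℝ) = A ×ˢ univ ∪ (Iio x \ A) ×ˢ univ := by
    rw [← union_prod, union_sdiff_cancel hAx]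
  have hdisj : Disjoint (A ×ˢ (univ : Set ℝ)) ((Iio x \ A) ×ˢ univ) :=
    Disjoint.set_prod_left disjoint_sdiff_right _ _
  have hC : MeasurableSet (Iio x \ A) := measurableSet_Iio.diff hA
  rw [hsplit, setIntegral_union hdisj (hC.prod .univ) i1.integrableOn i1.integrableOn,
    setIntegral_union hdisj (hC.prod .univ) i2.integrableOn i2.integrableOn] at htot
  have hSA := hS A hA
  have hSC := hS _ hC
  linarith
end
end
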